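/- arXiv:1307.8139 — 2 statements merged into one kernel-verified Lean document; each statement's English description precedes it below -/
import Mathlib

section
/- Let d > 1 and C > 0 be real constants. There exists a constant K > 0 (depending only on d and C) such that for every set system (X, S) on a finite ground set X with |X| = n ≥ 2 whose primal shatter function satisfies π_S(m) ≤ C·m^d for all 1 ≤ m ≤ n, there exists a coloring χ : X → {-1, +1} such that for every S ∈ S, |∑_{x∈S} χ(x)| ≤ K · n^{1/2 - 1/(2d)}. -/
/-! By double counting in the one-inclusion graph, a `δ`-separated family of bounded VC dimension
has at most twice as many members as it has traces on some small subset of `X`. This gives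
Haussler's packing bound: the set system has an `n / 2 ^ i`-net of size `O(2 ^ (i * d))` for every
`i`.

Chaining through these nets writes each set as an alternating sum of differences, the `i`-th of size
at most `n / 2 ^ i`. Draw a random signing of `X`, divide its discrepancy on each of these
differences by a tolerance `Δ i`, and round. When the entropy of the resulting integer vector is at
most `n / 10`, some fiber contains exponentially many signings, hence two that differ in at least
`n / 10` points, and half their difference is a partial coloring with discrepancy at most `Δ i` on
each difference of scale `i`. The entropy is small enough if `Δ i` is a large multiple of
`n ^ (1 / 2 - 1 / (2 * d))` times a factor decaying geometrically away from the critical scale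
`2 ^ (i * d) = n`. So the total discrepancy is of that order, and repeating on the uncolored points
costs only a geometric series. -/

namespace Discrepancy

open Finset
open scoped symmDiff Nat

variable {α : Type*} [DecidableEq α]

section OneInclusionGraph

variable {𝒜 : Finset (Finset α)} {s : Finset α}

theorem vcDim_le_iff {k : ℕ} : 𝒜.vcDim ≤ k ↔ ∀ s, 𝒜.Shatters s → #s ≤ k := by
  simp [vcDim]

theorem shatters_of_shatters_image_filter {p : α → Prop} [DecidablePred p]
    (hs : (𝒜.image (filter p)).Shatters s) : 𝒜.Shatters s := by
  obtain ⟨u, hu, hsu⟩ := hs.exists_superset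
  obtain ⟨v, -, rfl⟩ := mem_image.mp hu
  intro t ht
  obtain ⟨_, hw, rfl⟩ := hs ht
  obtain ⟨u', hu', rfl⟩ := mem_image.mp hw
  refine ⟨u', hu', ?_⟩
  ext x
  have hpx : x ∈ s → p x := fun hx ↦ (mem_filter.mp (hsu hx)).2
  grind

theorem vcDim_image_filter_le (𝒜 : Finset (Finset α)) (p : α → Prop) [DecidablePred p] :
    (𝒜.image (filter p)).vcDim ≤ 𝒜.vcDim :=
  vcDim_le_iff.mpr fun _ hs ↦ (shatters_of_shatters_image_filter hs).card_le_vcDim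

theorem vcDim_memberSubfamily_union_nonMemberSubfamily_le (x : α) (𝒜 : Finset (Finset α)) :
    (𝒜.memberSubfamily x ∪ 𝒜.nonMemberSubfamily x).vcDim ≤ 𝒜.vcDim := by
  simp_rw [memberSubfamily_union_nonMemberSubfamily, ← filter_ne']
  exact vcDim_image_filter_le 𝒜 (· ≠ x)

theorem shatters_insert_of_shatters_inter {x : α}
    (hs : (𝒜.memberSubfamily x ∩ 𝒜.nonMemberSubfamily x).Shatters s) :
    x ∉ s ∧ 𝒜.Shatters (insert x s) := by
  obtain ⟨u, hu, hsu⟩ := hs.exists_superset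
  simp only [mem_inter, mem_memberSubfamily, mem_nonMemberSubfamily] at hu
  refine ⟨fun hx ↦ hu.1.2 (hsu hx), fun t ht ↦ ?_⟩
  obtain ⟨v, hv, hsv⟩ := hs (t := t.erase x) (by grind)
  simp only [mem_inter, mem_memberSubfamily, mem_nonMemberSubfamily] at hv
  by_cases hxt : x ∈ t
  · exact ⟨insert x v, hv.1.1, by rw [← insert_inter_distrib, hsv, insert_erase hxt]⟩
  · exact ⟨v, hv.2.1, by rw [insert_inter_of_notMem hv.2.2, hsv, erase_eq_of_notMem hxt]⟩

theorem vcDim_memberSubfamily_inter_nonMemberSubfamily_lt {x : α}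
    (h : (𝒜.memberSubfamily x ∩ 𝒜.nonMemberSubfamily x).Nonempty) :
    (𝒜.memberSubfamily x ∩ 𝒜.nonMemberSubfamily x).vcDim < 𝒜.vcDim := by
  refine (Finset.sup_lt_iff ?_).mpr fun s hs ↦ ?_
  · have := (shatters_insert_of_shatters_inter (shatters_empty.mpr h)).2.card_le_vcDim
    simp only [insert_empty_eq, card_singleton] at this
    exact this
  · obtain ⟨hxs, hshat⟩ := shatters_insert_of_shatters_inter (mem_shatterer.mp hs)
    exact Nat.lt_of_succ_le ((card_insert_of_notMem hxs).symm.trans_le hshat.card_le_vcDim)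

/-- The number of edges of the one-inclusion graph of `𝒜` in directions from `U`: pairs of members
of `𝒜` that differ in exactly one element, which lies in `U`. An edge in direction `a` is encoded
by its endpoint avoiding `a`. -/
def oneInclusionEdges (U : Finset α) (𝒜 : Finset (Finset α)) : ℕ :=
  ∑ a ∈ U, #(𝒜.memberSubfamily a ∩ 𝒜.nonMemberSubfamily a)

theorem card_inter_add_card_inter_le {β : Type*} [DecidableEq β] (P Q R S : Finset β) :
    #(P ∩ Q) + #(R ∩ S) ≤ #((P ∪ R) ∩ (Q ∪ S)) + #((P ∩ R) ∩ (Q ∩ S)) := by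
  rw [← card_union_add_card_inter (P ∩ Q) (R ∩ S), inter_inter_inter_comm P Q R S]
  gcongr
  exact union_subset (inter_subset_inter subset_union_left subset_union_left)
    (inter_subset_inter subset_union_right subset_union_right)

theorem card_member_inter_nonMember_le_add {x a : α} (hax : a ≠ x) (𝒜 : Finset (Finset α)) :
    #(𝒜.memberSubfamily a ∩ 𝒜.nonMemberSubfamily a) ≤
      #((𝒜.memberSubfamily x).memberSubfamily a ∩ (𝒜.memberSubfamily x).nonMemberSubfamily a) +
      #((𝒜.nonMemberSubfamily x).memberSubfamily a ∩
        (𝒜.nonMemberSubfamily x).nonMemberSubfamily a) := by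
  rw [← card_memberSubfamily_add_card_nonMemberSubfamily x
    (𝒜.memberSubfamily a ∩ 𝒜.nonMemberSubfamily a)]
  gcongr <;> intro T <;>
    simp only [mem_memberSubfamily, mem_inter, mem_nonMemberSubfamily, mem_insert] <;>
    grind [Finset.insert_comm]

theorem oneInclusionEdges_insert_le {x : α} {U : Finset α} (hx : x ∉ U) (𝒜 : Finset (Finset α)) :
    oneInclusionEdges (insert x U) 𝒜 ≤
      #(𝒜.memberSubfamily x ∩ 𝒜.nonMemberSubfamily x) +
      (oneInclusionEdges U (𝒜.memberSubfamily x ∪ 𝒜.nonMemberSubfamily x) +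
        oneInclusionEdges U (𝒜.memberSubfamily x ∩ 𝒜.nonMemberSubfamily x)) := by
  unfold oneInclusionEdges
  rw [sum_insert hx, ← sum_add_distrib]
  gcongr with a ha
  refine (card_member_inter_nonMember_le_add (ne_of_mem_of_not_mem ha hx) 𝒜).trans ?_
  rw [memberSubfamily_union, memberSubfamily_inter, nonMemberSubfamily_union,
    nonMemberSubfamily_inter]
  exact card_inter_add_card_inter_le _ _ _ _

theorem oneInclusionEdges_le (U : Finset α) (𝒜 : Finset (Finset α)) :
    oneInclusionEdges U 𝒜 ≤ 𝒜.vcDim * #𝒜 := by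
  induction U using Finset.induction_on generalizing 𝒜 with
  | empty => simp [oneInclusionEdges]
  | insert x U hx ih =>
    set 𝒰 := 𝒜.memberSubfamily x ∪ 𝒜.nonMemberSubfamily x
    set ℐ := 𝒜.memberSubfamily x ∩ 𝒜.nonMemberSubfamily x
    have hunion : oneInclusionEdges U 𝒰 ≤ 𝒜.vcDim * #𝒰 :=
      (ih 𝒰).trans <|
        Nat.mul_le_mul_right _ (vcDim_memberSubfamily_union_nonMemberSubfamily_le x 𝒜)
    have hinter : #ℐ + oneInclusionEdges U ℐ ≤ 𝒜.vcDim * #ℐ := by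
      rcases ℐ.eq_empty_or_nonempty with hempty | hne
      · simpa [hempty] using ih ∅
      · calc #ℐ + oneInclusionEdges U ℐ ≤ #ℐ + ℐ.vcDim * #ℐ := by gcongr; exact ih ℐ
          _ = (ℐ.vcDim + 1) * #ℐ := by ring
          _ ≤ 𝒜.vcDim * #ℐ := by
            gcongr
            exact vcDim_memberSubfamily_inter_nonMemberSubfamily_lt hne
    calc oneInclusionEdges (insert x U) 𝒜
        ≤ #ℐ + (oneInclusionEdges U 𝒰 + oneInclusionEdges U ℐ) := oneInclusionEdges_insert_le hx 𝒜
      _ ≤ 𝒜.vcDim * #𝒰 + 𝒜.vcDim * #ℐ := by omega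
      _ = 𝒜.vcDim * #𝒜 := by
        rw [← mul_add, card_union_add_card_inter, card_memberSubfamily_add_card_nonMemberSubfamily]

end OneInclusionGraph

section Splitting

/-- The traces on `A` shared by more than `t` members of `P`. -/
def heavyTraces (P : Finset (Finset α)) (A : Finset α) (t : ℕ) : Finset (Finset α) :=
  {T ∈ P.image (· ∩ A) | t < #{S ∈ P | S ∩ A = T}}

/-- How often `a` splits a class of members of `P` with equal trace on `B`: each class is counted
with the size of the smaller of its two parts. In Haussler's argument this is compared with the
number of edges of one-inclusion graphs. -/
def splitCount (P : Finset (Finset α)) (B : Finset α) (a : α) : ℕ :=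
  ∑ T ∈ B.powerset, min #{S ∈ P | S ∩ B = T ∧ a ∉ S} #{S ∈ P | S ∩ B = T ∧ a ∈ S}

variable {P : Finset (Finset α)} {A S T : Finset α} {a : α} {t : ℕ}

theorem mem_heavyTraces : T ∈ heavyTraces P A t ↔ t < #{S ∈ P | S ∩ A = T} := by
  refine mem_filter.trans ⟨And.right, fun h ↦ ⟨?_, h⟩⟩
  obtain ⟨S, hS⟩ := card_pos.mp (pos_of_gt h)
  exact mem_image.mpr ⟨S, mem_filter.mp hS⟩

theorem subset_of_mem_heavyTraces (h : T ∈ heavyTraces P A t) : T ⊆ A := by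
  obtain ⟨S, -, rfl⟩ := mem_image.mp (mem_filter.mp h).1
  exact inter_subset_right

theorem vcDim_heavyTraces_le (P : Finset (Finset α)) (A : Finset α) (t : ℕ) :
    (heavyTraces P A t).vcDim ≤ P.vcDim := by
  have htrace : (· ∩ A) = filter (· ∈ A) := funext fun S ↦ (filter_mem_eq_inter).symm
  refine (vcDim_mono (filter_subset _ _)).trans ?_
  rw [htrace]
  exact vcDim_image_filter_le P (· ∈ A)

theorem sum_card_heavyTraces (P : Finset (Finset α)) (A : Finset α) :
    ∑ t ∈ range #P, #(heavyTraces P A t) = #P := by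
  simp_rw [heavyTraces, card_filter _ (P.image _)]
  rw [sum_comm, card_eq_sum_card_image (· ∩ A) P]
  refine sum_congr rfl fun T _ ↦ ?_
  rw [← card_filter, ← card_eq_sum_card_image]
  have : {t ∈ range #P | t < #{S ∈ P | S ∩ A = T}} = range #{S ∈ P | S ∩ A = T} := by
    have := card_filter_le P (· ∩ A = T)
    grind
  rw [this, card_range]

theorem inter_erase_eq_and_notMem_iff (ha : a ∈ A) (haT : a ∉ T) :
    S ∩ A.erase a = T ∧ a ∉ S ↔ S ∩ A = T := by
  rw [inter_erase]
  constructor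
  · rintro ⟨h, haS⟩
    rwa [erase_eq_of_notMem fun h' ↦ haS (mem_inter.mp h').1] at h
  · rintro rfl
    exact ⟨erase_eq_of_notMem haT, fun haS ↦ haT (mem_inter.mpr ⟨haS, ha⟩)⟩

theorem inter_erase_eq_and_mem_iff (ha : a ∈ A) (haT : a ∉ T) :
    S ∩ A.erase a = T ∧ a ∈ S ↔ S ∩ A = insert a T := by
  rw [inter_erase]
  constructor
  · rintro ⟨rfl, haS⟩
    exact (insert_erase (mem_inter.mpr ⟨haS, ha⟩)).symm
  · intro h
    exact ⟨by rw [h, erase_insert haT], (mem_inter.mp (h ▸ mem_insert_self a T)).1⟩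

theorem min_eq_card_filter_range {x y N : ℕ} (hx : x ≤ N) :
    min x y = #{t ∈ range N | t < x ∧ t < y} := by
  have : {t ∈ range N | t < x ∧ t < y} = range (min x y) := by grind
  rw [this, card_range]

theorem splitCount_erase_eq_sum (ha : a ∈ A) :
    splitCount P (A.erase a) a = ∑ t ∈ range #P,
      #((heavyTraces P A t).memberSubfamily a ∩ (heavyTraces P A t).nonMemberSubfamily a) := by
  have hedges (t : ℕ) :
      (heavyTraces P A t).memberSubfamily a ∩ (heavyTraces P A t).nonMemberSubfamily a =
        {T ∈ (A.erase a).powerset |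
          t < #{S ∈ P | S ∩ A = T} ∧ t < #{S ∈ P | S ∩ A = insert a T}} := by
    ext T
    have hTA : T ∈ heavyTraces P A t → T ⊆ A := subset_of_mem_heavyTraces
    simp only [mem_inter, mem_memberSubfamily, mem_nonMemberSubfamily, mem_filter, mem_powerset,
      subset_erase, ← mem_heavyTraces]
    tauto
  simp_rw [hedges, card_filter _ (powerset _)]
  rw [sum_comm, splitCount]
  refine sum_congr rfl fun T hT ↦ ?_
  have haT : a ∉ T := (subset_erase.mp (mem_powerset.mp hT)).2
  simp_rw [inter_erase_eq_and_notMem_iff ha haT, inter_erase_eq_and_mem_iff ha haT]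
  rw [← card_filter, min_eq_card_filter_range (card_filter_le P _)]

theorem sum_splitCount_erase_le (P : Finset (Finset α)) (A : Finset α) :
    ∑ a ∈ A, splitCount P (A.erase a) a ≤ P.vcDim * #P :=
  calc ∑ a ∈ A, splitCount P (A.erase a) a
      = ∑ t ∈ range #P, oneInclusionEdges A (heavyTraces P A t) := by
        simp_rw [oneInclusionEdges]
        rw [sum_comm]
        exact sum_congr rfl fun a ha ↦ splitCount_erase_eq_sum ha
    _ ≤ ∑ t ∈ range #P, P.vcDim * #(heavyTraces P A t) := by
        gcongr with t
        exact (oneInclusionEdges_le A _).trans <|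
          Nat.mul_le_mul_right _ (vcDim_heavyTraces_le P A t)
    _ = P.vcDim * #P := by rw [← mul_sum, sum_card_heavyTraces]

end Splitting

section Packing

variable {P : Finset (Finset α)} {X : Finset α} {δ : ℝ}

theorem card_symmDiff_eq_add (S T : Finset α) : #(S ∆ T) = #(S \ T) + #(T \ S) :=
  card_union_of_disjoint disjoint_sdiff_sdiff

theorem sum_card_sdiff_eq_sum_mul {U : Finset α} (hU : ∀ S ∈ P, ∀ T ∈ P, T \ S ⊆ U) :
    ∑ S ∈ P, ∑ T ∈ P, #(T \ S) = ∑ a ∈ U, #{S ∈ P | a ∉ S} * #{S ∈ P | a ∈ S} := by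
  have hcard : ∀ S ∈ P, ∀ T ∈ P, #(T \ S) =
      ∑ a ∈ U, (if a ∉ S then 1 else 0) * (if a ∈ T then 1 else 0) := by
    intro S hS T hT
    rw [← inter_eq_right.mpr (hU S hS T hT), ← filter_mem_eq_inter, card_filter]
    exact sum_congr rfl fun a _ ↦ by simp only [mem_sdiff]; grind
  calc ∑ S ∈ P, ∑ T ∈ P, #(T \ S)
      = ∑ S ∈ P, ∑ T ∈ P, ∑ a ∈ U, (if a ∉ S then 1 else 0) * (if a ∈ T then 1 else 0) :=
        sum_congr rfl fun S hS ↦ sum_congr rfl fun T hT ↦ hcard S hS T hT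
    _ = ∑ a ∈ U, ∑ S ∈ P, ∑ T ∈ P, (if a ∉ S then 1 else 0) * (if a ∈ T then 1 else 0) := by
        rw [sum_comm (s := U)]
        exact sum_congr rfl fun S _ ↦ sum_comm
    _ = ∑ a ∈ U, #{S ∈ P | a ∉ S} * #{S ∈ P | a ∈ S} := by
        simp_rw [← sum_mul_sum, ← card_filter]

theorem card_mul_le_sum_card_symmDiff
    (hsep : (P : Set (Finset α)).Pairwise fun S T ↦ δ ≤ #(S ∆ T)) :
    (#P : ℝ) * ((#P - 1) * δ) ≤ ∑ S ∈ P, ∑ T ∈ P, (#(S ∆ T) : ℝ) := by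
  rw [← nsmul_eq_mul]
  refine card_nsmul_le_sum _ _ _ fun S hS ↦ ?_
  calc ((#P : ℝ) - 1) * δ = ∑ _T ∈ P.erase S, δ := by
        rw [sum_const, card_erase_of_mem hS, nsmul_eq_mul, Nat.cast_pred (card_pos.mpr ⟨S, hS⟩)]
    _ ≤ ∑ T ∈ P.erase S, (#(S ∆ T) : ℝ) := by
        refine sum_le_sum fun T hT ↦ ?_
        exact hsep hS (mem_of_mem_erase hT) (ne_of_mem_erase hT).symm
    _ ≤ ∑ T ∈ P, (#(S ∆ T) : ℝ) :=
        sum_le_sum_of_subset_of_nonneg (erase_subset _ _) fun _ _ _ ↦ Nat.cast_nonneg _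

theorem le_sum_min_of_separated {U : Finset α} (hP : P.Nonempty)
    (hU : ∀ S ∈ P, ∀ T ∈ P, T \ S ⊆ U)
    (hsep : (P : Set (Finset α)).Pairwise fun S T ↦ δ ≤ #(S ∆ T)) :
    ((#P : ℝ) - 1) * δ / 2 ≤ (∑ a ∈ U, min #{S ∈ P | a ∉ S} #{S ∈ P | a ∈ S} : ℕ) := by
  have hsymm : ∑ S ∈ P, ∑ T ∈ P, #(S ∆ T) = 2 * ∑ S ∈ P, ∑ T ∈ P, #(T \ S) := by
    simp_rw [card_symmDiff_eq_add, sum_add_distrib]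
    rw [sum_comm, two_mul]
  have hmin : ∑ a ∈ U, #{S ∈ P | a ∉ S} * #{S ∈ P | a ∈ S} ≤
      #P * ∑ a ∈ U, min #{S ∈ P | a ∉ S} #{S ∈ P | a ∈ S} := by
    rw [mul_sum]
    refine sum_le_sum fun a _ ↦ ?_
    rw [← max_mul_min]
    exact Nat.mul_le_mul_right _ (max_le (card_filter_le _ _) (card_filter_le _ _))
  have hcount : ∑ S ∈ P, ∑ T ∈ P, (#(S ∆ T) : ℝ) ≤
      2 * (#P * (∑ a ∈ U, min #{S ∈ P | a ∉ S} #{S ∈ P | a ∈ S} : ℕ)) := by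
    rw [sum_card_sdiff_eq_sum_mul hU] at hsymm
    exact_mod_cast hsymm.trans_le (Nat.mul_le_mul_left 2 hmin)
  have hpos : (0 : ℝ) < #P := by exact_mod_cast hP.card_pos
  refine le_of_mul_le_mul_left ?_ hpos
  linarith [(card_mul_le_sum_card_symmDiff hsep).trans hcount]

theorem le_sum_splitCount (B : Finset α) (hX : ∀ S ∈ P, S ⊆ X)
    (hsep : (P : Set (Finset α)).Pairwise fun S T ↦ δ ≤ #(S ∆ T)) :
    ((#P : ℝ) - #(P.image (· ∩ B))) * δ / 2 ≤ (∑ a ∈ X \ B, splitCount P B a : ℕ) := by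
  set split : Finset α → α → ℕ := fun T a ↦
    min #{S ∈ P | S ∩ B = T ∧ a ∉ S} #{S ∈ P | S ∩ B = T ∧ a ∈ S}
  have hclass : ∀ T ∈ P.image (· ∩ B),
      ((#{S ∈ P | S ∩ B = T} : ℝ) - 1) * δ / 2 ≤ (∑ a ∈ X \ B, split T a : ℕ) := by
    intro T hT
    obtain ⟨S₀, hS₀⟩ := mem_image.mp hT
    simp_rw [split, ← filter_filter]
    refine le_sum_min_of_separated ⟨S₀, mem_filter.mpr hS₀⟩ (fun S hS S' hS' a ha ↦ ?_)
      (hsep.mono (coe_subset.mpr (filter_subset _ _)))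
    have hS'X : S' ⊆ X := hX S' (mem_filter.mp hS').1
    have hmem : a ∈ S ∩ B ↔ a ∈ S' ∩ B := by rw [(mem_filter.mp hS).2, (mem_filter.mp hS').2]
    grind
  have himage : P.image (· ∩ B) ⊆ B.powerset :=
    image_subset_iff.mpr fun S _ ↦ mem_powerset.mpr inter_subset_right
  calc ((#P : ℝ) - #(P.image (· ∩ B))) * δ / 2
      = ∑ T ∈ P.image (· ∩ B), ((#{S ∈ P | S ∩ B = T} : ℝ) - 1) * δ / 2 := by
        rw [← sum_div, ← sum_mul, sum_sub_distrib, card_eq_sum_card_image (· ∩ B) P]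
        simp
    _ ≤ ∑ T ∈ P.image (· ∩ B), ((∑ a ∈ X \ B, split T a : ℕ) : ℝ) := sum_le_sum hclass
    _ ≤ (∑ T ∈ B.powerset, ∑ a ∈ X \ B, split T a : ℕ) := by
        exact_mod_cast sum_le_sum_of_subset himage
    _ = (∑ a ∈ X \ B, splitCount P B a : ℕ) := by rw [sum_comm]; rfl

theorem sum_powersetCard_succ_erase {M : Type*} [AddCommMonoid M] (X : Finset α) (m : ℕ)
    (g : Finset α → α → M) :
    ∑ A ∈ powersetCard (m + 1) X, ∑ a ∈ A, g (A.erase a) a =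
      ∑ B ∈ powersetCard m X, ∑ a ∈ X \ B, g B a := by
  rw [sum_sigma', sum_sigma']
  refine sum_bij' (fun p _ ↦ ⟨p.1.erase p.2, p.2⟩) (fun p _ ↦ ⟨insert p.2 p.1, p.2⟩)
    ?_ ?_ ?_ ?_ ?_ <;> rintro ⟨A, a⟩ h <;>
    simp only [mem_sigma, mem_powersetCard, mem_sdiff] at h ⊢
  · exact ⟨⟨(erase_subset _ _).trans h.1.1, by rw [card_erase_of_mem h.2, h.1.2,
      Nat.add_sub_cancel]⟩, h.1.1 h.2, notMem_erase _ _⟩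
  · exact ⟨⟨insert_subset h.2.1 h.1.1, by rw [card_insert_of_notMem h.2.2, h.1.2]⟩,
      mem_insert_self _ _⟩
  · rw [insert_erase h.2]
  · rw [erase_insert h.2.2]

/-- Averaging the splitting numbers over all traces on
`m`-sets bounds them from below by separation and from above by the edge density of one-inclusion
graphs on `(m + 1)`-sets. -/
theorem exists_card_le_two_mul_card_trace {m : ℕ} (hm : m ≤ #X) (hX : ∀ S ∈ P, S ⊆ X)
    (hδ : 0 < δ) (hsep : (P : Set (Finset α)).Pairwise fun S T ↦ δ ≤ #(S ∆ T))
    (hmδ : 4 * (P.vcDim : ℝ) * #X ≤ (m + 1) * δ) :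
    ∃ Y ⊆ X, #Y = m ∧ #P ≤ 2 * #(P.image (· ∩ Y)) := by
  by_contra! hfew
  have hlower : (#X).choose m * (#P * δ / 4) < (#X).choose (m + 1) * (P.vcDim * #P : ℝ) :=
    calc ((#X).choose m : ℝ) * (#P * δ / 4) = ∑ _B ∈ powersetCard m X, (#P : ℝ) * δ / 4 := by
          rw [sum_const, card_powersetCard, nsmul_eq_mul]
      _ < ∑ B ∈ powersetCard m X, ((∑ a ∈ X \ B, splitCount P B a : ℕ) : ℝ) := by
          refine sum_lt_sum_of_nonempty (powersetCard_nonempty.mpr hm) fun B hB ↦ ?_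
          obtain ⟨hBX, hBm⟩ := mem_powersetCard.mp hB
          have htrace : (2 : ℝ) * #(P.image (· ∩ B)) < #P := by exact_mod_cast hfew B hBX hBm
          refine lt_of_lt_of_le ?_ (le_sum_splitCount B hX hsep)
          nlinarith
      _ = (∑ A ∈ powersetCard (m + 1) X, ∑ a ∈ A, splitCount P (A.erase a) a : ℕ) := by
          rw [sum_powersetCard_succ_erase X m fun B a ↦ splitCount P B a, Nat.cast_sum]
      _ ≤ (∑ _A ∈ powersetCard (m + 1) X, P.vcDim * #P : ℕ) := by
          exact_mod_cast sum_le_sum fun A _ ↦ sum_splitCount_erase_le P A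
      _ = (#X).choose (m + 1) * (P.vcDim * #P : ℝ) := by
          rw [sum_const, card_powersetCard, smul_eq_mul, Nat.cast_mul, Nat.cast_mul]
  have hchoose : ((#X).choose (m + 1) : ℝ) * (m + 1) ≤ (#X).choose m * #X := by
    exact_mod_cast (Nat.choose_succ_right_eq _ _).trans_le
      (Nat.mul_le_mul_left _ (Nat.sub_le _ _))
  have hupper : ((#X).choose (m + 1) : ℝ) * (P.vcDim * #P) * (m + 1) ≤
      (#X).choose m * (#P * δ / 4) * (m + 1) :=
    calc ((#X).choose (m + 1) : ℝ) * (P.vcDim * #P) * (m + 1)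
        = (#X).choose (m + 1) * (m + 1) * (P.vcDim * #P) := by ring
      _ ≤ (#X).choose m * #X * (P.vcDim * #P) := by gcongr
      _ = (#X).choose m * (4 * P.vcDim * #X) * #P / 4 := by ring
      _ ≤ (#X).choose m * ((m + 1) * δ) * #P / 4 := by gcongr
      _ = (#X).choose m * (#P * δ / 4) * (m + 1) := by ring
  exact hlower.not_ge (le_of_mul_le_mul_right hupper (by positivity))

end Packing

section Nets

/-- The primal shatter function of the set system `(X, P)` is at most `C * m ^ d` for `m ≥ 1`. -/
def HasShatterBound (C d : ℝ) (X : Finset α) (P : Finset (Finset α)) : Prop :=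
  ∀ Y ⊆ X, 1 ≤ #Y → (#(P.image (· ∩ Y)) : ℝ) ≤ C * (#Y : ℝ) ^ d

variable {C d δ : ℝ} {D m : ℕ} {X X' : Finset α} {P Q : Finset (Finset α)}

theorem image_inter_eq_self (hP : ∀ S ∈ P, S ⊆ X) : P.image (· ∩ X) = P :=
  (image_congr fun S hS ↦ inter_eq_left.mpr (hP S hS)).trans image_id

theorem HasShatterBound.mono (h : HasShatterBound C d X P) (hQP : Q ⊆ P) :
    HasShatterBound C d X Q := fun Y hY hY1 ↦
  (Nat.cast_le.mpr (card_le_card (image_subset_image hQP))).trans (h Y hY hY1)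

theorem HasShatterBound.image_inter (h : HasShatterBound C d X P) (hX' : X' ⊆ X) :
    HasShatterBound C d X' (P.image (· ∩ X')) := fun Y hY hY1 ↦ by
  have : (P.image (· ∩ X')).image (· ∩ Y) = P.image (· ∩ Y) := by
    rw [image_image]
    exact image_congr fun S _ ↦ by
      rw [Function.comp_apply, inter_assoc, inter_eq_right.mpr hY]
  exact this ▸ h Y (hY.trans hX') hY1

theorem HasShatterBound.vcDim_le (h : HasShatterBound C d X P) (hP : ∀ S ∈ P, S ⊆ X)
    (hD : ∀ k : ℕ, D < k → C * (k : ℝ) ^ d < 2 ^ k) : P.vcDim ≤ D := by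
  refine vcDim_le_iff.mpr fun s hs ↦ not_lt.mp fun hDs ↦ ?_
  obtain ⟨u, hu, hsu⟩ := hs.exists_superset
  have hpowerset : P.image (· ∩ s) = s.powerset := by
    simp_rw [← shatters_iff.mp hs, inter_comm]
  have hcard := h s (hsu.trans (hP u hu)) (Nat.one_le_of_lt hDs)
  rw [hpowerset, card_powerset, Nat.cast_pow, Nat.cast_ofNat] at hcard
  exact (hD #s hDs).not_ge hcard

theorem exists_forall_mul_rpow_lt_two_pow (d : ℝ) (hC : 0 ≤ C) :
    ∃ D : ℕ, 1 ≤ D ∧ ∀ k : ℕ, D < k → C * (k : ℝ) ^ d < 2 ^ k := by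
  have hlim := (tendsto_pow_const_div_const_pow_of_one_lt ⌈d⌉₊ (one_lt_two (α := ℝ))).const_mul C
  rw [mul_zero] at hlim
  obtain ⟨N, hN⟩ := Filter.eventually_atTop.mp (hlim.eventually (gt_mem_nhds one_pos))
  refine ⟨max N 1, le_max_right _ _, fun k hk ↦ ?_⟩
  have hk1 : (1 : ℝ) ≤ k := by exact_mod_cast (le_max_right N 1).trans hk.le
  have hlt := hN k ((le_max_left _ _).trans hk.le)
  rw [← mul_div_assoc, div_lt_one (by positivity)] at hlt
  refine lt_of_le_of_lt ?_ hlt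
  rw [← Real.rpow_natCast]
  gcongr
  exact Nat.le_ceil d

theorem HasShatterBound.card_le_of_separated (h : HasShatterBound C d X P)
    (hX : X.Nonempty) (hP : ∀ S ∈ P, S ⊆ X) (hC : 0 ≤ C) (hd : 0 ≤ d) (hm : 1 ≤ m) (hδ : 0 < δ)
    (hsep : (P : Set (Finset α)).Pairwise fun S T ↦ δ ≤ #(S ∆ T))
    (hmδ : 4 * (P.vcDim : ℝ) * #X ≤ m * δ) : (#P : ℝ) ≤ 2 * C * (m : ℝ) ^ d := by
  rcases le_or_gt m #X with hmX | hXm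
  · obtain ⟨Y, hYX, rfl, hPY⟩ := exists_card_le_two_mul_card_trace hmX hP hδ hsep (by nlinarith)
    calc (#P : ℝ) ≤ 2 * #(P.image (· ∩ Y)) := by exact_mod_cast hPY
      _ ≤ 2 * (C * (#Y : ℝ) ^ d) := by gcongr; exact h Y hYX hm
      _ = 2 * C * (#Y : ℝ) ^ d := by ring
  · have hle := h X Subset.rfl hX.card_pos
    rw [image_inter_eq_self hP] at hle
    calc (#P : ℝ) ≤ C * (#X : ℝ) ^ d := hle
      _ ≤ C * (m : ℝ) ^ d := by gcongr
      _ ≤ 2 * C * (m : ℝ) ^ d := by gcongr; linarith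

theorem exists_maximal_pairwise {β : Type*} (s : Finset β) (r : β → β → Prop) [Std.Symm r] :
    ∃ t ⊆ s, (t : Set β).Pairwise r ∧ ∀ a ∈ s, a ∉ t → ∃ b ∈ t, ¬ r a b := by
  classical
  set 𝒯 := s.powerset.filter fun t : Finset β ↦ (t : Set β).Pairwise r
  obtain ⟨t, ht⟩ := 𝒯.exists_maximal ⟨∅, by simp [𝒯]⟩
  obtain ⟨hts, htr⟩ := mem_filter.mp ht.prop
  refine ⟨t, mem_powerset.mp hts, htr, fun a ha hat ↦ ?_⟩
  by_contra! hra
  have hins : insert a t ∈ 𝒯 := by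
    refine mem_filter.mpr ⟨mem_powerset.mpr (insert_subset ha (mem_powerset.mp hts)), ?_⟩
    rw [coe_insert, Set.pairwise_insert_of_symm]
    exact ⟨htr, fun b hb _ ↦ hra b hb⟩
  exact hat (ht.le_of_ge hins (subset_insert a t) (mem_insert_self a t))

/-- The factor `A` in the bound `A * N ^ d` on the size of an `#X / N`-net. -/
noncomputable def netConst (C d : ℝ) (D : ℕ) : ℝ := 2 * C * (4 * D) ^ d

theorem HasShatterBound.exists_net (h : HasShatterBound C d X P) (hX : X.Nonempty)
    (hP : ∀ S ∈ P, S ⊆ X) (hC : 0 ≤ C) (hd : 0 ≤ d) (hD : 1 ≤ D) (hPD : P.vcDim ≤ D)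
    {N : ℕ} (hN : 1 ≤ N) :
    ∃ F ⊆ P, (#F : ℝ) ≤ netConst C d D * (N : ℝ) ^ d ∧
      ∀ S ∈ P, ∃ T ∈ F, (#(S ∆ T) : ℝ) < #X / N := by
  have : (0 : ℝ) < #X := by exact_mod_cast hX.card_pos
  have hN0 : (0 : ℝ) < N := by exact_mod_cast hN
  have hδ : (0 : ℝ) < #X / N := by positivity
  have : Std.Symm fun S T : Finset α ↦ (#X / N : ℝ) ≤ #(S ∆ T) :=
    ⟨fun S T hST ↦ (symmDiff_comm S T) ▸ hST⟩
  obtain ⟨F, hFP, hsep, hmax⟩ := exists_maximal_pairwise P fun S T ↦ (#X / N : ℝ) ≤ #(S ∆ T)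
  refine ⟨F, hFP, ?_, fun S hS ↦ ?_⟩
  · have hFD : (F.vcDim : ℝ) ≤ D := by exact_mod_cast (vcDim_mono hFP).trans hPD
    have hcard := (h.mono hFP).card_le_of_separated hX (fun S hS ↦ hP S (hFP hS)) hC hd
      (m := 4 * D * N) (by nlinarith) hδ hsep <|
        calc 4 * (F.vcDim : ℝ) * #X ≤ 4 * D * #X := by gcongr
          _ = (4 * D * N : ℕ) * (#X / N : ℝ) := by push_cast; field_simp
    rw [netConst, mul_assoc, ← Real.mul_rpow (by positivity) hN0.le]
    exact_mod_cast hcard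
  · by_cases hSF : S ∈ F
    · exact ⟨S, hSF, by simpa using hδ⟩
    · simpa only [not_le] using hmax S hS hSF

end Nets

section Exponential

theorem one_add_pow_div_factorial_le_exp {x : ℝ} (hx : 0 ≤ x) {p : ℕ} (hp : p ≠ 0) :
    1 + x ^ p / p ! ≤ Real.exp x := by
  refine le_trans ?_ (Real.sum_le_exp_of_nonneg hx (p + 1))
  have hsub : ({0, p} : Finset ℕ) ⊆ range (p + 1) := by grind
  calc 1 + x ^ p / p ! = ∑ i ∈ {0, p}, x ^ i / i ! := by rw [sum_pair hp.symm]; simp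
    _ ≤ ∑ i ∈ range (p + 1), x ^ i / i ! :=
      sum_le_sum_of_subset_of_nonneg hsub fun _ _ _ ↦ by positivity

theorem abs_round_half_le_pow (y : ℝ) {p : ℕ} (hp : p ≠ 0) : |(round (y / 2) : ℝ)| ≤ |y| ^ p := by
  have hround := abs_sub_round (y / 2)
  rcases lt_or_ge |y| 1 with hy | hy
  · have hzero : round (y / 2) = 0 := by
      have : |(round (y / 2) : ℝ)| < 1 := by
        rw [abs_le] at hround
        rw [abs_lt] at hy ⊢
        constructor <;> linarith
      exact Int.abs_lt_one_iff.mp (by exact_mod_cast this)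
    rw [hzero, Int.cast_zero, abs_zero]
    positivity
  · calc |(round (y / 2) : ℝ)| = |y / 2 - (y / 2 - round (y / 2))| := by rw [sub_sub_cancel]
      _ ≤ |y / 2| + |y / 2 - round (y / 2)| := abs_sub _ _
      _ ≤ |y| / 2 + 1 / 2 := by rw [abs_div, abs_two]; gcongr
      _ ≤ |y| := by linarith
      _ ≤ |y| ^ p := le_self_pow₀ hy hp

theorem abs_round_half_le_exp {l : ℝ} (hl : 0 < l) (y : ℝ) {p : ℕ} (hp : p ≠ 0) :
    |(round (y / 2) : ℝ)| ≤ p ! / l ^ p * Real.exp (l * |y|) :=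
  calc |(round (y / 2) : ℝ)| ≤ |y| ^ p := abs_round_half_le_pow y hp
    _ = p ! / l ^ p * ((l * |y|) ^ p / p !) := by rw [mul_pow]; field_simp
    _ ≤ p ! / l ^ p * Real.exp (l * |y|) := by
      gcongr
      exact Real.pow_div_factorial_le_exp _ (by positivity) p

end Exponential

section RandomSigns

/-- The random signing of the ground set: a uniformly random subset `A` of `X` gives the sign `1` to
its elements and `-1` to the others. -/
noncomputable def signOf (A : Finset α) (x : α) : ℝ := if x ∈ A then 1 else -1

theorem sum_powerset_prod_ite {R : Type*} [CommRing R] (X : Finset α) (f g : α → R) :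
    ∑ A ∈ X.powerset, ∏ x ∈ X, (if x ∈ A then f x else g x) = ∏ x ∈ X, (f x + g x) := by
  rw [prod_add]
  refine sum_congr rfl fun A hA ↦ ?_
  rw [prod_ite, filter_mem_eq_inter, filter_notMem_eq_sdiff,
    inter_eq_right.mpr (mem_powerset.mp hA)]

theorem sum_exp_signed_sum_le (X : Finset α) (v : α → ℝ) (s : ℝ) :
    ∑ A ∈ X.powerset, Real.exp (s * ∑ x ∈ X, v x * signOf A x) ≤
      2 ^ #X * Real.exp (s ^ 2 * (∑ x ∈ X, v x ^ 2) / 2) :=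
  calc ∑ A ∈ X.powerset, Real.exp (s * ∑ x ∈ X, v x * signOf A x)
      = ∑ A ∈ X.powerset, ∏ x ∈ X,
          (if x ∈ A then Real.exp (s * v x) else Real.exp (-(s * v x))) := by
        refine sum_congr rfl fun A _ ↦ ?_
        rw [mul_sum, Real.exp_sum]
        refine prod_congr rfl fun x _ ↦ ?_
        rw [signOf]
        split_ifs <;> ring_nf
    _ = ∏ x ∈ X, 2 * Real.cosh (s * v x) := by
        rw [sum_powerset_prod_ite]
        exact prod_congr rfl fun x _ ↦ by rw [Real.cosh_eq]; ring
    _ ≤ ∏ x ∈ X, 2 * Real.exp ((s * v x) ^ 2 / 2) := by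
        gcongr with x
        exact Real.cosh_le_exp_half_sq _
    _ = 2 ^ #X * Real.exp (s ^ 2 * (∑ x ∈ X, v x ^ 2) / 2) := by
        rw [prod_mul_distrib, prod_const, ← Real.exp_sum, ← sum_div, mul_sum]
        simp_rw [mul_pow]

theorem sum_exp_abs_signed_sum_le {X : Finset α} {v : α → ℝ} {l : ℝ}
    (hv : l ^ 2 * ∑ x ∈ X, v x ^ 2 ≤ 1) :
    ∑ A ∈ X.powerset, Real.exp (l * |∑ x ∈ X, v x * signOf A x|) ≤ 2 ^ #X * 4 := by
  have hexp : Real.exp (l ^ 2 * (∑ x ∈ X, v x ^ 2) / 2) ≤ 2 := by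
    have : Real.exp (1 / 2) ≤ 2 := by
      rw [← Real.le_log_iff_exp_le two_pos]
      linarith [Real.log_two_gt_d9]
    exact (Real.exp_le_exp.mpr (by linarith)).trans this
  have habs (y : ℝ) : Real.exp (l * |y|) ≤ Real.exp (l * y) + Real.exp (-l * y) := by
    rcases abs_choice y with h | h <;> rw [h]
    · exact le_add_of_nonneg_right (Real.exp_pos _).le
    · rw [mul_neg, ← neg_mul]
      exact le_add_of_nonneg_left (Real.exp_pos _).le
  calc ∑ A ∈ X.powerset, Real.exp (l * |∑ x ∈ X, v x * signOf A x|)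
      ≤ ∑ A ∈ X.powerset, (Real.exp (l * ∑ x ∈ X, v x * signOf A x) +
          Real.exp (-l * ∑ x ∈ X, v x * signOf A x)) := sum_le_sum fun A _ ↦ habs _
    _ ≤ 2 ^ #X * 2 + 2 ^ #X * 2 := by
        rw [sum_add_distrib]
        gcongr
        · exact (sum_exp_signed_sum_le X v l).trans (by gcongr)
        · exact (sum_exp_signed_sum_le X v (-l)).trans (by rw [neg_sq]; gcongr)
    _ = 2 ^ #X * 4 := by ring

theorem sum_abs_round_le {X : Finset α} {v : α → ℝ} {l : ℝ} (hl : 0 < l)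
    (hv : l ^ 2 * ∑ x ∈ X, v x ^ 2 ≤ 1) {p : ℕ} (hp : p ≠ 0) :
    ∑ A ∈ X.powerset, |(round ((∑ x ∈ X, v x * signOf A x) / 2) : ℝ)| ≤
      2 ^ #X * (4 * p ! / l ^ p) :=
  calc ∑ A ∈ X.powerset, |(round ((∑ x ∈ X, v x * signOf A x) / 2) : ℝ)|
      ≤ ∑ A ∈ X.powerset, p ! / l ^ p * Real.exp (l * |∑ x ∈ X, v x * signOf A x|) :=
        sum_le_sum fun A _ ↦ abs_round_half_le_exp hl _ hp
    _ ≤ p ! / l ^ p * (2 ^ #X * 4) := by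
        rw [← mul_sum]
        gcongr
        exact sum_exp_abs_signed_sum_le hv
    _ = 2 ^ #X * (4 * p ! / l ^ p) := by ring

end RandomSigns

section Coding

/-- The length, in nats, of the code word for `k` in the ideal code for the two-sided geometric
distribution on `ℤ` with ratio `exp (-l)`. -/
noncomputable def geomCost (l : ℝ) (k : ℤ) : ℝ :=
  Real.log ((1 + Real.exp (-l)) / (1 - Real.exp (-l))) + l * |(k : ℝ)|

theorem hasSum_pow_natAbs {q : ℝ} (hq₀ : 0 ≤ q) (hq₁ : q < 1) :
    HasSum (fun k : ℤ ↦ q ^ k.natAbs) ((1 + q) / (1 - q)) := by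
  have hgeom := hasSum_geometric_of_lt_one hq₀ hq₁
  have hneg : HasSum (fun n : ℕ ↦ q ^ (-((n : ℤ) + 1)).natAbs) (q * (1 - q)⁻¹) := by
    have : (fun n : ℕ ↦ q ^ (-((n : ℤ) + 1)).natAbs) = fun n ↦ q * q ^ n :=
      funext fun n ↦ by rw [Int.natAbs_neg, ← pow_succ']; rfl
    exact this ▸ hgeom.mul_left q
  convert HasSum.of_nat_of_neg_add_one (f := fun k : ℤ ↦ q ^ k.natAbs) hgeom hneg using 1
  ring

theorem sum_exp_neg_geomCost_le_one {l : ℝ} (hl : 0 < l) (s : Finset ℤ) :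
    ∑ k ∈ s, Real.exp (-geomCost l k) ≤ 1 := by
  set q := Real.exp (-l) with hq
  have hq₀ : 0 < q := Real.exp_pos _
  have hq₁ : q < 1 := Real.exp_lt_one_iff.mpr (neg_neg_of_pos hl)
  have hpos : 0 < (1 + q) / (1 - q) := div_pos (by linarith) (by linarith)
  have hexp (k : ℤ) : Real.exp (-geomCost l k) = ((1 + q) / (1 - q))⁻¹ * q ^ k.natAbs := by
    rw [geomCost, neg_add, Real.exp_add, Real.exp_neg, Real.exp_log hpos, hq, ← Real.exp_nat_mul,
      Nat.cast_natAbs, Int.cast_abs]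
    ring_nf
  simp_rw [hexp]
  rw [← mul_sum, inv_mul_le_one₀ hpos]
  exact sum_le_hasSum s (fun _ _ ↦ by positivity) (hasSum_pow_natAbs hq₀.le hq₁)

theorem log_geometric_normalizer_le {l : ℝ} (hl : 0 < l) {p : ℕ} (hp : p ≠ 0) :
    Real.log ((1 + Real.exp (-l)) / (1 - Real.exp (-l))) ≤ 2 * p ! / l ^ p := by
  have hexp := one_add_pow_div_factorial_le_exp hl.le hp
  have hpow : 0 < l ^ p / p ! := by positivity
  have hratio : (1 + Real.exp (-l)) / (1 - Real.exp (-l)) - 1 = 2 / (Real.exp l - 1) := by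
    have : Real.exp l - 1 ≠ 0 := by linarith
    rw [Real.exp_neg]
    field_simp
    ring
  calc Real.log ((1 + Real.exp (-l)) / (1 - Real.exp (-l)))
      ≤ 2 / (Real.exp l - 1) := by
        rw [← hratio]
        refine Real.log_le_sub_one_of_pos (div_pos (by positivity) ?_)
        exact sub_pos.mpr (Real.exp_lt_one_iff.mpr (neg_neg_of_pos hl))
    _ ≤ 2 / (l ^ p / p !) := by gcongr; linarith
    _ = 2 * p ! / l ^ p := by rw [div_div_eq_mul_div]

theorem sum_geomCost_round_le {X : Finset α} {v : α → ℝ} {l : ℝ} (hl : 0 < l)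
    (hv : l ^ 2 * ∑ x ∈ X, v x ^ 2 ≤ 1) {p : ℕ} (hp : p ≠ 0) :
    ∑ A ∈ X.powerset, geomCost l (round ((∑ x ∈ X, v x * signOf A x) / 2)) ≤
      2 ^ #X * (6 * (p + 1)! / l ^ p) := by
  have hlog := log_geometric_normalizer_le hl hp
  have hfact : (p ! : ℝ) ≤ (p + 1)! := by exact_mod_cast Nat.factorial_le p.le_succ
  simp_rw [geomCost]
  rw [sum_add_distrib, ← mul_sum, sum_const, card_powerset, nsmul_eq_mul, Nat.cast_pow,
    Nat.cast_ofNat]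
  calc _ ≤ 2 ^ #X * (2 * p ! / l ^ p) + l * (2 ^ #X * (4 * (p + 1)! / l ^ (p + 1))) := by
        gcongr
        exact sum_abs_round_le hl hv p.succ_ne_zero
    _ = 2 ^ #X * ((2 * p ! + 4 * (p + 1)!) / l ^ p) := by field_simp; ring
    _ ≤ 2 ^ #X * (6 * (p + 1)! / l ^ p) := by gcongr; linarith

end Coding

section Entropy

theorem exists_card_mul_exp_neg_le_card_fiber {σ τ : Type*} [DecidableEq τ] {Ω : Finset σ}
    (hΩ : Ω.Nonempty) {b : σ → τ} {c : τ → ℝ} {E : ℝ}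
    (hkraft : ∑ z ∈ Ω.image b, Real.exp (-c z) ≤ 1) (hcost : ∑ w ∈ Ω, c (b w) ≤ #Ω * E) :
    ∃ z, #Ω * Real.exp (-E) ≤ #{w ∈ Ω | b w = z} := by
  obtain ⟨z, -, hz⟩ := exists_max_image (Ω.image b) (fun z ↦ #{w ∈ Ω | b w = z}) (hΩ.image b)
  refine ⟨z, ?_⟩
  have htangent (w : σ) : (1 + E - c (b w)) * Real.exp (-E) ≤ Real.exp (-c (b w)) := by
    have := Real.add_one_le_exp (E - c (b w))
    calc (1 + E - c (b w)) * Real.exp (-E) ≤ Real.exp (E - c (b w)) * Real.exp (-E) := by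
          gcongr; linarith
      _ = Real.exp (-c (b w)) := by rw [← Real.exp_add]; ring_nf
  calc #Ω * Real.exp (-E) ≤ (∑ w ∈ Ω, (1 + E - c (b w))) * Real.exp (-E) := by
        gcongr
        rw [sum_sub_distrib, sum_const, nsmul_eq_mul]
        linarith
    _ ≤ ∑ w ∈ Ω, Real.exp (-c (b w)) := by
        rw [sum_mul]
        exact sum_le_sum fun w _ ↦ htangent w
    _ = ∑ y ∈ Ω.image b, #{w ∈ Ω | b w = y} * Real.exp (-c y) := by
        simp_rw [sum_comp (fun y ↦ Real.exp (-c y)) b, nsmul_eq_mul]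
    _ ≤ ∑ y ∈ Ω.image b, #{w ∈ Ω | b w = z} * Real.exp (-c y) := by
        refine sum_le_sum fun y hy ↦ mul_le_mul_of_nonneg_right ?_ (Real.exp_pos _).le
        exact_mod_cast hz y hy
    _ ≤ #{w ∈ Ω | b w = z} := by
        rw [← mul_sum]
        exact mul_le_of_le_one_right (Nat.cast_nonneg _) hkraft

theorem sum_exp_neg_sum_le_one {ι κ : Type*} [Fintype ι] {c : ι → κ → ℝ}
    (hc : ∀ i, ∀ s : Finset κ, ∑ k ∈ s, Real.exp (-c i k) ≤ 1) (Z : Finset (ι → κ)) :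
    ∑ z ∈ Z, Real.exp (-∑ i, c i (z i)) ≤ 1 := by
  classical
  have hsub : Z ⊆ Fintype.piFinset fun i ↦ Z.image fun z ↦ z i := fun z hz ↦
    Fintype.mem_piFinset.mpr fun i ↦ mem_image_of_mem (fun z ↦ z i) hz
  calc ∑ z ∈ Z, Real.exp (-∑ i, c i (z i)) = ∑ z ∈ Z, ∏ i, Real.exp (-c i (z i)) := by
        simp_rw [← sum_neg_distrib, Real.exp_sum]
    _ ≤ ∑ z ∈ Fintype.piFinset fun i ↦ Z.image fun z ↦ z i, ∏ i, Real.exp (-c i (z i)) :=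
        sum_le_sum_of_subset_of_nonneg hsub fun _ _ _ ↦ by positivity
    _ = ∏ i, ∑ k ∈ Z.image fun z ↦ z i, Real.exp (-c i k) := by
        rw [prod_univ_sum]
    _ ≤ 1 := prod_le_one (fun _ _ ↦ by positivity) fun i _ ↦ hc i _

end Entropy

section HammingBall

variable {X A B : Finset α} {Q : Finset (Finset α)}

theorem sum_pow_card_symmDiff {R : Type*} [CommSemiring R] (hA : A ⊆ X) (q : R) :
    ∑ B ∈ X.powerset, q ^ #(A ∆ B) = (q + 1) ^ #X :=
  calc ∑ B ∈ X.powerset, q ^ #(A ∆ B) = ∑ B ∈ X.powerset, q ^ #B := by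
        have hmaps : ∀ B ∈ X.powerset, A ∆ B ∈ X.powerset := fun B hB ↦
          mem_powerset.mpr <|
          symmDiff_le_sup.trans (sup_le hA (mem_powerset.mp hB))
        exact sum_nbij' (A ∆ ·) (A ∆ ·) hmaps hmaps (fun B _ ↦ symmDiff_symmDiff_cancel_left A B)
          (fun B _ ↦ symmDiff_symmDiff_cancel_left A B) fun _ _ ↦ rfl
    _ = (q + 1) ^ #X := by simpa only [one_pow, mul_one] using sum_pow_mul_eq_add_pow q 1 X

theorem card_mul_exp_le_of_forall_card_symmDiff_le (hA : A ⊆ X) (hQ : Q ⊆ X.powerset)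
    (hnear : ∀ B ∈ Q, 10 * #(A ∆ B) ≤ #X) :
    #Q * Real.exp (-(#X / 5)) ≤ (Real.exp (-2) + 1) ^ #X :=
  calc #Q * Real.exp (-(#X / 5)) = ∑ _B ∈ Q, Real.exp (-(#X / 5)) := by
        rw [sum_const, nsmul_eq_mul]
    _ ≤ ∑ B ∈ Q, Real.exp (-2) ^ #(A ∆ B) := by
        gcongr with B hB
        have : (10 * #(A ∆ B) : ℝ) ≤ #X := by exact_mod_cast hnear B hB
        rw [← Real.exp_nat_mul, Real.exp_le_exp]
        linarith
    _ ≤ ∑ B ∈ X.powerset, Real.exp (-2) ^ #(A ∆ B) :=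
        sum_le_sum_of_subset_of_nonneg hQ fun _ _ _ ↦ by positivity
    _ = (Real.exp (-2) + 1) ^ #X := sum_pow_card_symmDiff hA _

theorem exp_neg_two_add_one_lt : Real.exp (-2) + 1 < 2 * Real.exp (-(3 / 10)) := by
  have hsmall : Real.exp (-2) ≤ 1 / 4 := by
    have htwo : Real.exp 1 ^ 2 = Real.exp 2 := by rw [← Real.exp_nat_mul]; norm_num
    rw [Real.exp_neg, ← htwo, one_div]
    have := Real.exp_one_gt_d9
    gcongr
    nlinarith
  linarith [Real.add_one_le_exp (-(3 / 10) : ℝ)]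

theorem exists_card_le_ten_mul_card_symmDiff (hA : A ⊆ X) (hQ : Q ⊆ X.powerset)
    (hcard : 2 ^ #X * Real.exp (-(#X / 10)) ≤ #Q) : ∃ B ∈ Q, #X ≤ 10 * #(A ∆ B) := by
  by_contra! hnear
  obtain ⟨B, hB⟩ : Q.Nonempty := by
    rw [← card_pos, ← Nat.cast_pos (α := ℝ)]
    exact lt_of_lt_of_le (by positivity) hcard
  have hX : #X ≠ 0 := Nat.ne_zero_of_lt (hnear B hB)
  refine (pow_lt_pow_left₀ exp_neg_two_add_one_lt (by positivity) hX).not_ge ?_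
  calc (2 * Real.exp (-(3 / 10))) ^ #X
      = 2 ^ #X * Real.exp (-(#X / 10)) * Real.exp (-(#X / 5)) := by
        rw [mul_pow, ← Real.exp_nat_mul, mul_assoc, ← Real.exp_add]
        ring_nf
    _ ≤ #Q * Real.exp (-(#X / 5)) := by gcongr
    _ ≤ (Real.exp (-2) + 1) ^ #X :=
        card_mul_exp_le_of_forall_card_symmDiff_le hA hQ fun B hB ↦ (hnear B hB).le

end HammingBall

section PartialColoring

variable {X A B : Finset α}

/-- A partial coloring of `X`: a map to `{-1, 0, 1}`, where `0` means uncolored, which colors at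
least a tenth of the points of `X`. -/
structure IsPartialColoring (X : Finset α) (χ : α → ℤ) : Prop where
  eq_or_eq_or_eq (x : α) : χ x = 1 ∨ χ x = 0 ∨ χ x = -1
  card_le : #X ≤ 10 * #{x ∈ X | χ x ≠ 0}

/-- The difference `1_A - 1_B` of two indicator functions. It serves both as a coloring and, for two
consecutive sets of a chain, as the coefficients of a constraint on colorings. -/
def indicatorDiff (A B : Finset α) (x : α) : ℤ :=
  (if x ∈ A then 1 else 0) - (if x ∈ B then 1 else 0)

theorem cast_indicatorDiff (A B : Finset α) (x : α) :
    (indicatorDiff A B x : ℝ) = (signOf A x - signOf B x) / 2 := by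
  rw [indicatorDiff, signOf, signOf]
  split_ifs <;> norm_num

theorem indicatorDiff_ne_zero_iff {x : α} : indicatorDiff A B x ≠ 0 ↔ x ∈ A ∆ B := by
  rw [indicatorDiff, mem_symmDiff]
  grind

theorem isPartialColoring_indicatorDiff (hA : A ⊆ X) (hB : B ⊆ X) (hAB : #X ≤ 10 * #(A ∆ B)) :
    IsPartialColoring X (indicatorDiff A B) where
  eq_or_eq_or_eq x := by
    rw [indicatorDiff]
    split_ifs <;> simp
  card_le := by
    have : {x ∈ X | indicatorDiff A B x ≠ 0} = A ∆ B := by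
      simp_rw [indicatorDiff_ne_zero_iff, filter_mem_eq_inter, inter_eq_right]
      exact symmDiff_le_sup.trans (sup_le hA hB)
    rwa [this]

theorem abs_sub_div_two_le_one_of_round_eq {y z : ℝ} (h : round (y / 2) = round (z / 2)) :
    |(y - z) / 2| ≤ 1 := by
  have hy := abs_sub_round (y / 2)
  have hz := abs_sub_round (z / 2)
  rw [h] at hy
  rw [abs_le] at *
  constructor <;> linarith

omit [DecidableEq α] in
theorem exists_partial_coloring {ι : Type*} [Fintype ι] (X : Finset α) {v : ι → α → ℝ}
    {l : ι → ℝ} {p : ι → ℕ} (hl : ∀ i, 0 < l i) (hp : ∀ i, p i ≠ 0)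
    (hv : ∀ i, l i ^ 2 * ∑ x ∈ X, v i x ^ 2 ≤ 1)
    (hcost : ∑ i, 6 * (p i + 1)! / l i ^ p i ≤ (#X : ℝ) / 10) :
    ∃ χ, IsPartialColoring X χ ∧ ∀ i, |∑ x ∈ X, v i x * χ x| ≤ 1 := by
  classical
  set b : Finset α → ι → ℤ := fun A i ↦ round ((∑ x ∈ X, v i x * signOf A x) / 2)
  have hcode : ∑ A ∈ X.powerset, ∑ i, geomCost (l i) (b A i) ≤ #X.powerset * (#X / 10 : ℝ) :=
    calc ∑ A ∈ X.powerset, ∑ i, geomCost (l i) (b A i)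
        = ∑ i, ∑ A ∈ X.powerset, geomCost (l i) (b A i) := sum_comm
      _ ≤ ∑ i, 2 ^ #X * (6 * (p i + 1)! / l i ^ p i) :=
          sum_le_sum fun i _ ↦ sum_geomCost_round_le (hl i) (hv i) (hp i)
      _ ≤ #X.powerset * (#X / 10 : ℝ) := by
          rw [← mul_sum, card_powerset, Nat.cast_pow, Nat.cast_ofNat]
          gcongr
  obtain ⟨z, hz⟩ := exists_card_mul_exp_neg_le_card_fiber (powerset_nonempty X) (b := b)
    (c := fun z ↦ ∑ i, geomCost (l i) (z i))
    (sum_exp_neg_sum_le_one (fun i s ↦ sum_exp_neg_geomCost_le_one (hl i) s) _) hcode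
  rw [card_powerset, Nat.cast_pow, Nat.cast_ofNat] at hz
  obtain ⟨A, hA⟩ : {A ∈ X.powerset | b A = z}.Nonempty := by
    rw [← card_pos, ← Nat.cast_pos (α := ℝ)]
    exact lt_of_lt_of_le (by positivity) hz
  obtain ⟨hAX, hAz⟩ := mem_filter.mp hA
  rw [mem_powerset] at hAX
  obtain ⟨B, hB, hAB⟩ := exists_card_le_ten_mul_card_symmDiff hAX (filter_subset _ _) hz
  obtain ⟨hBX, hBz⟩ := mem_filter.mp hB
  refine ⟨indicatorDiff A B,
    isPartialColoring_indicatorDiff hAX (mem_powerset.mp hBX) hAB, fun i ↦ ?_⟩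
  have hround : b A i = b B i := by rw [hAz, hBz]
  convert abs_sub_div_two_le_one_of_round_eq hround using 2
  simp_rw [cast_indicatorDiff]
  rw [← sum_sub_distrib, sum_div]
  exact sum_congr rfl fun x _ ↦ by ring

end PartialColoring

section Chaining

variable {C d : ℝ} {D : ℕ} {X : Finset α} {P : Finset (Finset α)}

theorem sum_indicatorDiff_sq {S T : Finset α} (hS : S ⊆ X) (hT : T ⊆ X) :
    ∑ x ∈ X, (indicatorDiff S T x : ℝ) ^ 2 = #(S ∆ T) :=
  calc ∑ x ∈ X, (indicatorDiff S T x : ℝ) ^ 2 = ∑ x ∈ X, if x ∈ S ∆ T then 1 else 0 := by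
        refine sum_congr rfl fun x _ ↦ ?_
        by_cases hxS : x ∈ S <;> by_cases hxT : x ∈ T <;>
          simp [indicatorDiff, mem_symmDiff, hxS, hxT]
    _ = #(S ∆ T) := by
        rw [sum_boole, filter_mem_eq_inter,
          inter_eq_right.mpr (symmDiff_le_sup.trans (sup_le hS hT))]

theorem sum_indicatorDiff_mul {S T : Finset α} (hS : S ⊆ X) (hT : T ⊆ X) (f : α → ℝ) :
    ∑ x ∈ X, indicatorDiff S T x * f x = ∑ x ∈ S, f x - ∑ x ∈ T, f x := by
  have hsum {S : Finset α} (hS : S ⊆ X) : ∑ x ∈ X, (if x ∈ S then f x else 0) = ∑ x ∈ S, f x := by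
    rw [sum_ite_mem, inter_eq_right.mpr hS]
  rw [← hsum hS, ← hsum hT, ← sum_sub_distrib]
  refine sum_congr rfl fun x _ ↦ ?_
  rw [indicatorDiff]
  split_ifs <;> simp

/-- A decomposition of the sets in `P` along chains of increasingly fine approximations: `level i`
holds the approximations of scale `i`, starting with `∅` at scale `0`, and `parent i` sends a set of
scale `i + 1` to a set of scale `i` that differs from it in at most `#X / 2 ^ i` points. At scale
`#X` the approximations are exact. -/
structure ChainDecomposition (X : Finset α) (P : Finset (Finset α)) where
  level : ℕ → Finset (Finset α)
  parent : ℕ → Finset α → Finset α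
  level_zero : level 0 = {∅}
  subset {i S} : S ∈ level i → S ⊆ X
  parent_mem {i S} : S ∈ level (i + 1) → parent i S ∈ level i
  card_symmDiff_le {i S} : S ∈ level (i + 1) → (#(S ∆ parent i S) : ℝ) ≤ #X / 2 ^ i
  mem_level_card {S} : S ∈ P → S ∈ level #X

theorem eq_of_card_symmDiff_lt_one {S T : Finset α} (h : (#(S ∆ T) : ℝ) < 1) : S = T := by
  have : #(S ∆ T) = 0 := Nat.lt_one_iff.mp (by exact_mod_cast h)
  rwa [card_eq_zero, ← bot_eq_empty, symmDiff_eq_bot] at this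

theorem HasShatterBound.exists_chainDecomposition (h : HasShatterBound C d X P)
    (hX : X.Nonempty) (hP : ∀ S ∈ P, S ⊆ X) (hC : 0 ≤ C) (hd : 0 ≤ d) (hD : 1 ≤ D)
    (hPD : P.vcDim ≤ D) :
    ∃ c : ChainDecomposition X P, ∀ i,
      (#(c.level (i + 1)) : ℝ) ≤ netConst C d D * 2 ^ d * ((2 : ℝ) ^ i) ^ d := by
  choose F hFP hcard hnear using fun i : ℕ ↦
    h.exists_net hX hP hC hd hD hPD (N := 2 ^ i) Nat.one_le_two_pow
  choose! near hmem hdist using hnear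
  simp only [Nat.cast_pow, Nat.cast_ofNat] at hcard hdist
  refine ⟨{
    level := fun | 0 => {∅} | i + 1 => F (i + 1)
    parent := fun | 0 => fun _ ↦ ∅ | i + 1 => near (i + 1)
    level_zero := rfl
    subset := ?_
    parent_mem := ?_
    card_symmDiff_le := ?_
    mem_level_card := ?_ }, fun i ↦ ?_⟩
  · rintro (_ | i) S hS
    · simp_all
    · exact hP S (hFP _ hS)
  · rintro (_ | i) S hS
    · exact mem_singleton_self ∅
    · exact hmem _ S (hFP _ hS)
  · rintro (_ | i) S hS
    · simpa [← bot_eq_empty] using card_le_card (hP S (hFP _ hS))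
    · exact (hdist _ S (hFP _ hS)).le
  · intro S hS
    obtain ⟨n, hn⟩ := Nat.exists_eq_succ_of_ne_zero hX.card_ne_zero
    have hlt : (#X : ℝ) / 2 ^ #X < 1 := by
      rw [div_lt_one (by positivity)]
      exact_mod_cast Nat.lt_two_pow_self
    have heq := eq_of_card_symmDiff_lt_one ((hdist #X S hS).trans hlt)
    have := hmem #X S hS
    rw [← heq] at this
    rw [hn] at this ⊢
    exact this
  · refine (hcard (i + 1)).trans_eq ?_
    rw [pow_succ', Real.mul_rpow (by positivity) (by positivity), mul_assoc]

namespace ChainDecomposition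

theorem abs_sum_le (c : ChainDecomposition X P) {f : α → ℝ} {Δ : ℕ → ℝ} {n : ℕ}
    (hf : ∀ i < n, ∀ S ∈ c.level (i + 1), |∑ x ∈ S, f x - ∑ x ∈ c.parent i S, f x| ≤ Δ i)
    {S : Finset α} (hS : S ∈ c.level n) : |∑ x ∈ S, f x| ≤ ∑ i ∈ range n, Δ i := by
  induction n generalizing S with
  | zero =>
    rw [c.level_zero, mem_singleton] at hS
    simp [hS]
  | succ n ih =>
    have hparent := ih (fun i hi ↦ hf i (hi.trans n.lt_succ_self)) (c.parent_mem hS)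
    calc |∑ x ∈ S, f x|
        = |∑ x ∈ c.parent n S, f x + (∑ x ∈ S, f x - ∑ x ∈ c.parent n S, f x)| := by
          rw [add_sub_cancel]
      _ ≤ |∑ x ∈ c.parent n S, f x| + |∑ x ∈ S, f x - ∑ x ∈ c.parent n S, f x| := abs_add_le _ _
      _ ≤ ∑ i ∈ range n, Δ i + Δ n := add_le_add hparent (hf n n.lt_succ_self S hS)
      _ = ∑ i ∈ range (n + 1), Δ i := (sum_range_succ _ _).symm

theorem exists_partial_coloring (c : ChainDecomposition X P) {Δ l : ℕ → ℝ} {p : ℕ → ℕ}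
    (hΔ : ∀ i, 0 < Δ i) (hl : ∀ i, 0 < l i) (hp : ∀ i, p i ≠ 0)
    (hlΔ : ∀ i, l i ^ 2 * (#X / 2 ^ i) ≤ Δ i ^ 2)
    (hcost : ∑ i ∈ range #X, #(c.level (i + 1)) * (6 * (p i + 1)! / l i ^ p i) ≤ (#X : ℝ) / 10) :
    ∃ χ, IsPartialColoring X χ ∧
      ∀ S ∈ P, |∑ x ∈ S, (χ x : ℝ)| ≤ ∑ i ∈ range #X, Δ i := by
  set W : Finset (Σ _ : ℕ, Finset α) := (range #X).sigma fun i ↦ c.level (i + 1) with hW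
  have hsubset : ∀ w ∈ W, w.2 ⊆ X ∧ c.parent w.1 w.2 ⊆ X := fun w hw ↦
    have hw2 := (mem_sigma.mp hw).2
    ⟨c.subset hw2, c.subset (c.parent_mem hw2)⟩
  obtain ⟨χ, hχ, hχW⟩ := Discrepancy.exists_partial_coloring (ι := W) X
    (v := fun w x ↦ indicatorDiff w.1.2 (c.parent w.1.1 w.1.2) x / Δ w.1.1)
    (l := fun w ↦ l w.1.1) (p := fun w ↦ p w.1.1) (fun w ↦ hl _) (fun w ↦ hp _)
    (fun ⟨w, hw⟩ ↦ by
      simp_rw [div_pow]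
      rw [← sum_div, sum_indicatorDiff_sq (hsubset w hw).1 (hsubset w hw).2, ← mul_div_assoc,
        div_le_one (pow_pos (hΔ _) 2)]
      refine le_trans ?_ (hlΔ w.1)
      gcongr
      exact c.card_symmDiff_le (mem_sigma.mp hw).2)
    (by
      rw [sum_coe_sort W fun w ↦ 6 * ((p w.1 + 1)! : ℝ) / l w.1 ^ p w.1, hW, sum_sigma]
      simpa only [sum_const, nsmul_eq_mul] using hcost)
  refine ⟨χ, hχ, fun S hS ↦ c.abs_sum_le (fun i hi T hT ↦ ?_) (c.mem_level_card hS)⟩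
  have hTW : (⟨i, T⟩ : Σ _ : ℕ, Finset α) ∈ W := mem_sigma.mpr ⟨mem_range.mpr hi, hT⟩
  have hle := hχW ⟨_, hTW⟩
  simp_rw [div_mul_eq_mul_div] at hle
  rwa [← sum_div, sum_indicatorDiff_mul (hsubset _ hTW).1 (hsubset _ hTW).2, abs_div,
    abs_of_pos (hΔ i), div_le_one (hΔ i)] at hle

end ChainDecomposition

end Chaining

section ChainingParameters

variable {A d K : ℝ} {X : Finset α} {P : Finset (Finset α)}

theorem sum_rpow_abs_sub_le {r : ℝ} (hr₀ : 0 < r) (hr₁ : r < 1) (t : ℝ) (n : ℕ) :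
    ∑ i ∈ range n, r ^ |i - t| ≤ 2 / (1 - r) := by
  have hgeom (k : ℕ) : ∑ i ∈ range k, r ^ i ≤ (1 - r)⁻¹ :=
    sum_le_hasSum _ (fun i _ ↦ by positivity) (hasSum_geometric_of_lt_one hr₀.le hr₁)
  have hterm {k : ℕ} {u : ℝ} (hku : k ≤ |u|) : r ^ |u| ≤ r ^ k := by
    rw [← Real.rpow_natCast]
    exact Real.rpow_le_rpow_of_exponent_ge hr₀ hr₁.le hku
  set m := ⌈t⌉₊
  calc ∑ i ∈ range n, r ^ |i - t|
      ≤ ∑ i ∈ range (m + n), r ^ |i - t| :=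
        sum_le_sum_of_subset_of_nonneg (range_subset_range.mpr (Nat.le_add_left n m))
          fun _ _ _ ↦ by positivity
    _ = ∑ i ∈ range m, r ^ |i - t| + ∑ i ∈ range n, r ^ |(m + i : ℕ) - t| := sum_range_add _ _ _
    _ ≤ ∑ i ∈ range m, r ^ (m - 1 - i) + ∑ i ∈ range n, r ^ i := by
        refine add_le_add (sum_le_sum fun i hi ↦ hterm ?_) (sum_le_sum fun i _ ↦ hterm ?_)
        · have him := mem_range.mp hi
          have hmt : ((m - 1 : ℕ) : ℝ) < t := Nat.lt_ceil.mp (by omega)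
          rw [Nat.cast_sub (Nat.le_sub_one_of_lt him)]
          exact (by linarith : ((m - 1 : ℕ) : ℝ) - i ≤ -(i - t)).trans (neg_le_abs _)
        · push_cast
          have := Nat.le_ceil t
          exact (by linarith : (i : ℝ) ≤ m + i - t).trans (le_abs_self _)
    _ ≤ (1 - r)⁻¹ + (1 - r)⁻¹ := by
        rw [sum_range_reflect (fun i ↦ r ^ i) m]
        exact add_le_add (hgeom m) (hgeom n)
    _ = 2 / (1 - r) := by ring

/-- The ratio of the geometric decay of the parameters away from the critical scale. -/
noncomputable def decayRatio : ℝ := 2 ^ (-(1 / 4) : ℝ)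

theorem decayRatio_pos : 0 < decayRatio := Real.rpow_pos_of_pos two_pos _

theorem decayRatio_lt_one : decayRatio < 1 :=
  Real.rpow_lt_one_of_one_lt_of_neg one_lt_two (by norm_num)

theorem decayRatio_rpow (u : ℝ) : decayRatio ^ u = 2 ^ (-(u / 4)) := by
  rw [decayRatio, ← Real.rpow_mul two_pos.le]
  ring_nf

/-- The order of the moment used to bound the entropy of a constraint whose scale exceeds the
critical one by `u`. Beyond the critical scale it is large, to beat the number of constraints. -/
noncomputable def momentOrder (d u : ℝ) : ℕ := if 0 ≤ u then ⌈4 * d⌉₊ + 1 else 1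

theorem momentOrder_ne_zero (d u : ℝ) : momentOrder d u ≠ 0 := by
  rw [momentOrder]
  split_ifs <;> simp

theorem momentOrder_le (d u : ℝ) : momentOrder d u ≤ ⌈4 * d⌉₊ + 1 := by
  rw [momentOrder]
  split_ifs <;> simp

theorem rpow_le_rpow_pow_momentOrder (hd : 1 ≤ d) (u : ℝ) :
    (2 : ℝ) ^ (d * u) ≤ (2 ^ (u / 2) * decayRatio ^ |u|) ^ momentOrder d u * decayRatio ^ |u| := by
  rw [decayRatio_rpow, ← Real.rpow_add two_pos, ← Real.rpow_natCast, ← Real.rpow_mul two_pos.le,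
    ← Real.rpow_add two_pos]
  refine Real.rpow_le_rpow_of_exponent_le one_le_two ?_
  rw [momentOrder]
  split_ifs with hu
  · have hceil := Nat.le_ceil (4 * d)
    rw [abs_of_nonneg hu]
    push_cast
    nlinarith
  · rw [abs_of_neg (not_le.mp hu)]
    push_cast
    nlinarith

/-- The constant `K` for which the constraints `K * #X ^ (1 / 2 - 1 / (2 * d)) * decayRatio ^ |u|`
on the levels of a chain decomposition, with at most `A * (2 ^ i) ^ d` sets on level `i + 1`, have
total entropy at most `#X / 10`. -/
noncomputable def chainingConst (A d : ℝ) : ℝ :=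
  max 1 (60 * A * (⌈4 * d⌉₊ + 2)! * (2 / (1 - decayRatio)))

theorem chainingConst_pos (A d : ℝ) : 0 < chainingConst A d :=
  one_pos.trans_le (le_max_left _ _)

theorem mul_entropy_le {N n t : ℝ} {i : ℕ} (hA : 0 ≤ A) (hd : 1 ≤ d) (hK : 1 ≤ K) (hn : 0 ≤ n)
    (ht : (2 : ℝ) ^ (d * t) = n) (hN : N ≤ A * ((2 : ℝ) ^ i) ^ d) :
    N * (6 * (momentOrder d (i - t) + 1)! /
        (K * (2 ^ ((i - t) / 2) * decayRatio ^ |i - t|)) ^ momentOrder d (i - t)) ≤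
      n * (6 * A * (⌈4 * d⌉₊ + 2)! / K) * decayRatio ^ |i - t| := by
  set u : ℝ := i - t with hu
  set p := momentOrder d u
  set y : ℝ := 2 ^ (u / 2) * decayRatio ^ |u|
  have hr := decayRatio_pos
  have hy₀ : 0 < y := by positivity
  have hfact : ((p + 1)! : ℝ) ≤ (⌈4 * d⌉₊ + 2)! := by
    exact_mod_cast Nat.factorial_le (Nat.succ_le_succ (momentOrder_le d u))
  have hscale : ((2 : ℝ) ^ i) ^ d = n * 2 ^ (d * u) := by
    rw [← ht, ← Real.rpow_add two_pos, ← Real.rpow_natCast, ← Real.rpow_mul two_pos.le, hu]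
    ring_nf
  have hNu : N ≤ A * (n * (y ^ p * decayRatio ^ |u|)) := by
    refine hN.trans ?_
    rw [hscale]
    gcongr
    exact rpow_le_rpow_pow_momentOrder hd u
  have hKp : K ≤ K ^ p := le_self_pow₀ hK (momentOrder_ne_zero d u)
  calc N * (6 * (p + 1)! / (K * y) ^ p)
      ≤ A * (n * (y ^ p * decayRatio ^ |u|)) * (6 * (⌈4 * d⌉₊ + 2)! / (K * y ^ p)) := by
        rw [mul_pow]
        gcongr
    _ = n * (6 * A * (⌈4 * d⌉₊ + 2)! / K) * decayRatio ^ |u| := by field_simp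

theorem rpow_half_sub_eq {n t : ℝ} (hd : d ≠ 0) (ht : (2 : ℝ) ^ (d * t) = n) (i : ℕ) :
    ((2 : ℝ) ^ ((i - t) / 2)) ^ 2 * (n / 2 ^ i) = (n ^ (1 / 2 - 1 / (2 * d))) ^ 2 := by
  rw [← ht]
  simp only [← Real.rpow_natCast, ← Real.rpow_mul two_pos.le, ← Real.rpow_sub two_pos,
    ← Real.rpow_add two_pos]
  congr 1
  field_simp
  push_cast
  ring

theorem ChainDecomposition.exists_partial_coloring_rpow (c : ChainDecomposition X P)
    (hX : X.Nonempty) (hA : 0 ≤ A) (hd : 1 ≤ d)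
    (hc : ∀ i, (#(c.level (i + 1)) : ℝ) ≤ A * ((2 : ℝ) ^ i) ^ d) :
    ∃ χ, IsPartialColoring X χ ∧ ∀ S ∈ P, |∑ x ∈ S, (χ x : ℝ)| ≤
      chainingConst A d * (2 / (1 - decayRatio)) * (#X : ℝ) ^ (1 / 2 - 1 / (2 * d)) := by
  have hr := decayRatio_pos
  have hn : (0 : ℝ) < #X := by exact_mod_cast hX.card_pos
  have hd₀ : d ≠ 0 := by positivity
  obtain ⟨t, ht⟩ : ∃ t : ℝ, (2 : ℝ) ^ (d * t) = #X := ⟨Real.logb 2 #X / d, by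
    rw [mul_div_cancel₀ _ hd₀, Real.rpow_logb two_pos (by norm_num) hn]⟩
  set K := chainingConst A d
  have hK₁ : 1 ≤ K := le_max_left _ _
  have hK₂ : 60 * A * (⌈4 * d⌉₊ + 2)! * (2 / (1 - decayRatio)) ≤ K := le_max_right _ _
  set Δ : ℕ → ℝ := fun i ↦ K * (#X : ℝ) ^ (1 / 2 - 1 / (2 * d)) * decayRatio ^ |i - t| with hΔ
  have hsum := sum_rpow_abs_sub_le hr decayRatio_lt_one t #X
  obtain ⟨χ, hχ, hχP⟩ := c.exists_partial_coloring (Δ := Δ)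
    (l := fun i ↦ K * (2 ^ ((i - t) / 2) * decayRatio ^ |i - t|))
    (p := fun i ↦ momentOrder d (i - t)) (fun i ↦ by positivity) (fun i ↦ by positivity)
    (fun i ↦ momentOrder_ne_zero _ _)
    (fun i ↦ by
      simp only [hΔ, mul_pow, ← rpow_half_sub_eq hd₀ ht i]
      exact le_of_eq (by ring))
    (calc _ ≤ ∑ i ∈ range #X, #X * (6 * A * (⌈4 * d⌉₊ + 2)! / K) * decayRatio ^ |i - t| :=
            sum_le_sum fun i _ ↦ mul_entropy_le hA hd hK₁ hn.le ht (hc i)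
      _ ≤ #X * (6 * A * (⌈4 * d⌉₊ + 2)! / K) * (2 / (1 - decayRatio)) := by
          rw [← mul_sum]
          gcongr
      _ = #X / 10 * (60 * A * (⌈4 * d⌉₊ + 2)! * (2 / (1 - decayRatio)) / K) := by ring
      _ ≤ #X / 10 := mul_le_of_le_one_right (by positivity) (div_le_one_of_le₀ hK₂ (by positivity)))
  refine ⟨χ, hχ, fun S hS ↦ (hχP S hS).trans ?_⟩
  rw [← mul_sum, mul_right_comm]
  gcongr

theorem HasShatterBound.exists_partial_coloring {C : ℝ} {D : ℕ} (h : HasShatterBound C d X P)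
    (hX : X.Nonempty) (hP : ∀ S ∈ P, S ⊆ X) (hC : 0 ≤ C) (hd : 1 ≤ d) (hD : 1 ≤ D)
    (hlt : ∀ k : ℕ, D < k → C * (k : ℝ) ^ d < 2 ^ k) :
    ∃ χ, IsPartialColoring X χ ∧ ∀ S ∈ P, |∑ x ∈ S, (χ x : ℝ)| ≤
      chainingConst (netConst C d D * 2 ^ d) d * (2 / (1 - decayRatio)) *
        (#X : ℝ) ^ (1 / 2 - 1 / (2 * d)) := by
  obtain ⟨c, hc⟩ := h.exists_chainDecomposition hX hP hC (by linarith) hD (h.vcDim_le hP hlt)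
  exact c.exists_partial_coloring_rpow hX (by rw [netConst]; positivity) hd hc

end ChainingParameters

section Iteration

omit [DecidableEq α] in
theorem IsPartialColoring.card_zeros_le {X : Finset α} {χ : α → ℤ} (h : IsPartialColoring X χ) :
    (#{x ∈ X | χ x = 0} : ℝ) ≤ 9 / 10 * #X := by
  have hcard : #X ≤ 10 * (#{x ∈ X | χ x ≠ 0} : ℝ) := by exact_mod_cast h.card_le
  have hsplit : (#{x ∈ X | χ x = 0} : ℝ) + #{x ∈ X | χ x ≠ 0} = #X := by
    exact_mod_cast card_filter_add_card_filter_not _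
  linarith

theorem sum_inter_ite_eq_zero (χ ψ : α → ℤ) (S X : Finset α) :
    ∑ x ∈ S ∩ X, ((if χ x = 0 then ψ x else χ x : ℤ) : ℝ) =
      ∑ x ∈ S ∩ X, (χ x : ℝ) + ∑ x ∈ S ∩ {x ∈ X | χ x = 0}, (ψ x : ℝ) := by
  rw [inter_filter, sum_filter, ← sum_add_distrib]
  refine sum_congr rfl fun x _ ↦ ?_
  split_ifs with hx <;> simp [hx]

theorem exists_coloring_of_partial {X : Finset α} {P : Finset (Finset α)} {K e : ℝ} (hK : 0 ≤ K)
    (he : 0 < e) (hpartial : ∀ X' ⊆ X, X'.Nonempty → ∃ χ, IsPartialColoring X' χ ∧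
      ∀ S ∈ P, |∑ x ∈ S ∩ X', (χ x : ℝ)| ≤ K * (#X' : ℝ) ^ e) :
    ∃ χ : α → ℤ, (∀ x ∈ X, χ x = 1 ∨ χ x = -1) ∧
      ∀ S ∈ P, |∑ x ∈ S ∩ X, (χ x : ℝ)| ≤ K / (1 - (9 / 10) ^ e) * (#X : ℝ) ^ e := by
  have hq : (9 / 10 : ℝ) ^ e < 1 := Real.rpow_lt_one (by norm_num) (by norm_num) he
  set L := K / (1 - (9 / 10 : ℝ) ^ e) with hL
  have hL₀ : 0 ≤ L := div_nonneg hK (by linarith)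
  have hKL : K + L * (9 / 10) ^ e = L := by
    have : 1 - (9 / 10 : ℝ) ^ e ≠ 0 := by linarith
    rw [hL]
    field_simp
    ring
  induction X using Finset.strongInduction with
  | H X ih =>
    rcases X.eq_empty_or_nonempty with rfl | hX
    · exact ⟨1, by simp, fun S _ ↦ by rw [inter_empty, sum_empty, abs_zero]; positivity⟩
    obtain ⟨χ, hχ, hχP⟩ := hpartial X Subset.rfl hX
    set Z := {x ∈ X | χ x = 0}
    have hZle := hχ.card_zeros_le
    have hn : (0 : ℝ) < #X := by exact_mod_cast hX.card_pos
    have hZX : Z ⊂ X := by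
      refine (filter_subset _ _).ssubset_of_ne fun h ↦ ?_
      rw [h] at hZle
      linarith
    obtain ⟨ψ, hψ, hψP⟩ := ih Z hZX fun X' hX' ↦ hpartial X' (hX'.trans hZX.subset)
    refine ⟨fun x ↦ if χ x = 0 then ψ x else χ x, fun x hx ↦ ?_, fun S hS ↦ ?_⟩
    · have := hχ.eq_or_eq_or_eq x
      have := hψ x
      grind
    calc _ ≤ |∑ x ∈ S ∩ X, (χ x : ℝ)| + |∑ x ∈ S ∩ Z, (ψ x : ℝ)| := by
          rw [sum_inter_ite_eq_zero]
          exact abs_add_le _ _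
      _ ≤ K * (#X : ℝ) ^ e + L * (#Z : ℝ) ^ e := add_le_add (hχP S hS) (hψP S hS)
      _ ≤ K * (#X : ℝ) ^ e + L * (9 / 10 * #X) ^ e := by gcongr
      _ = (K + L * (9 / 10) ^ e) * (#X : ℝ) ^ e := by
          rw [Real.mul_rpow (by norm_num) hn.le]
          ring
      _ = L * (#X : ℝ) ^ e := by rw [hKL]

end Iteration

end Discrepancy

open Discrepancy Finset

/-- Matoušek's discrepancy bound for bounded primal shatter dimension.
Let `d > 1` and `C > 0` be real constants. There exists a constant `K > 0` (depending only
on `d` and `C`) such that for every set system `(X, 𝒮)` on a finite ground set `X` with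
`|X| = n ≥ 2` whose primal shatter function satisfies `π_𝒮(m) ≤ C·m^d` for all `1 ≤ m ≤ n`,
there exists a coloring `χ : X → {-1, +1}` such that for every `S ∈ 𝒮`,
`|∑_{x ∈ S} χ(x)| ≤ K · n^(1/2 - 1/(2d))`. -/
theorem stmt0 (d C : ℝ) (hd : 1 < d) (hC : 0 < C) :
    ∃ K : ℝ, 0 < K ∧
      ∀ (α : Type) [DecidableEq α] (X : Finset α) (𝒮 : Finset (Finset α)),
        2 ≤ X.card →
        (∀ S ∈ 𝒮, S ⊆ X) →
        (∀ Y ⊆ X, 1 ≤ Y.card →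
          ((𝒮.image (· ∩ Y)).card : ℝ) ≤ C * (Y.card : ℝ) ^ d) →
        ∃ χ : α → ℤ,
          (∀ x ∈ X, χ x = 1 ∨ χ x = -1) ∧
          ∀ S ∈ 𝒮, |(∑ x ∈ S, (χ x : ℝ))| ≤
            K * (X.card : ℝ) ^ ((1 : ℝ) / 2 - 1 / (2 * d)) := by
  obtain ⟨D, hD, hDlt⟩ := exists_forall_mul_rpow_lt_two_pow d hC.le
  set e : ℝ := 1 / 2 - 1 / (2 * d)
  have he : 0 < e := sub_pos.mpr (one_div_lt_one_div_of_lt two_pos (by linarith))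
  have hq : (9 / 10 : ℝ) ^ e < 1 := Real.rpow_lt_one (by norm_num) (by norm_num) he
  set K := chainingConst (netConst C d D * 2 ^ d) d * (2 / (1 - decayRatio))
  have hK : 0 < K :=
    mul_pos (chainingConst_pos _ _) (div_pos two_pos (sub_pos.mpr decayRatio_lt_one))
  refine ⟨K / (1 - (9 / 10) ^ e), div_pos hK (sub_pos.mpr hq), fun α _ X 𝒮 _ h𝒮 hshatter ↦ ?_⟩
  have hpartial : ∀ X' ⊆ X, X'.Nonempty → ∃ χ, IsPartialColoring X' χ ∧
      ∀ S ∈ 𝒮, |∑ x ∈ S ∩ X', (χ x : ℝ)| ≤ K * (#X' : ℝ) ^ e := fun X' hX' hne ↦ by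
    obtain ⟨χ, hχ, hχ𝒮⟩ := (HasShatterBound.image_inter hshatter hX').exists_partial_coloring hne
      (forall_mem_image.mpr fun _ _ ↦ inter_subset_right) hC.le hd.le hD hDlt
    exact ⟨χ, hχ, forall_mem_image.mp hχ𝒮⟩
  obtain ⟨χ, hχ, hχ𝒮⟩ := exists_coloring_of_partial hK.le he hpartial
  exact ⟨χ, hχ, fun S hS ↦ by simpa only [inter_eq_left.mpr (h𝒮 S hS)] using hχ𝒮 S hS⟩
end

section
/- Let d ≥ 1 and 1 ≤ d₁ ≤ d be integers and let C > 0 and K > 0 be real constants. There exists a constant C' > 0 (depending only on d, C, and K) such that the following holds. Let (X, S) be a set system with |X| = n = 2^κ for an integer κ ≥ 1, satisfying the size-sensitive counting condition with parameters (C, d, d₁). Then for all integers i, j with 1 ≤ i, i − 1 ≤ j ≤ κ, and j ≥ 1, every (n/2^j)-separated subfamily P ⊆ S all of whose members F satisfy |F| ≤ K·n/2^{i−1} has cardinality |P| ≤ C' · j^d · 2^{jd} / 2^{(d−d₁)(i−1)}. -/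
open scoped symmDiff

/-!
Draw `m ≈ c · t · log t` points of `X` independently and uniformly, and let `Y` be the set of drawn
points. A pair of members of `P` at distance at least `|X| / t` is left unseparated by `Y` with
probability at most `(1 - 1 / t) ^ m ≤ t ^ (-c)`. As long as `P` is not too large, `Y` therefore
separates all of `P` with good probability, while the traces on `Y` have at most twice their
expected total size. By Markov's inequality at least half of the members have a small trace; these
traces are distinct, and the counting condition on `Y` bounds their number. The a priori bound on
`|P|` is removed by a bootstrap: for the target bound `B`, a family with more than `B` members would
have a subfamily of size in `(B, B + 1]`, to which the argument applies once `c` is large enough.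
-/

section Sampling

open Finset
open scoped BigOperators

variable {α ι 𝕜 : Type*} [Fintype ι]

lemma expect_piFinset_apply [Semifield 𝕜] [CharZero 𝕜] [DecidableEq ι] (X : Finset α)
    (f : α → 𝕜) (i : ι) :
    𝔼 x ∈ Fintype.piFinset fun _ : ι => X, f (x i) = 𝔼 a ∈ X, f a := by
  obtain rfl | hX := X.eq_empty_or_nonempty
  · have : Nonempty ι := ⟨i⟩
    simp
  have hX₀ : (#X : 𝕜) ≠ 0 := by exact_mod_cast hX.card_ne_zero
  obtain ⟨m, hm⟩ := Nat.exists_eq_succ_of_ne_zero (Fintype.card_pos_iff.2 ⟨i⟩).ne'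
  rw [expect_eq_sum_div_card, expect_eq_sum_div_card, Fintype.sum_piFinset_apply,
    Fintype.card_piFinset, prod_const, card_univ, hm, Nat.succ_sub_one, nsmul_eq_mul, pow_succ]
  push_cast
  field_simp

variable [DecidableEq α]

lemma expect_piFinset_card_filter_mem [Semifield 𝕜] [CharZero 𝕜] [DecidableEq ι]
    (X F : Finset α) :
    𝔼 x ∈ Fintype.piFinset fun _ : ι => X, (#{i | x i ∈ F} : 𝕜) =
      Fintype.card ι * (#(X ∩ F) / #X) := by
  have hmem (i : ι) :
      𝔼 x ∈ Fintype.piFinset fun _ : ι => X, (if x i ∈ F then (1 : 𝕜) else 0) =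
        #(X ∩ F) / #X := by
    rw [expect_piFinset_apply X (fun a => if a ∈ F then 1 else 0) i, expect_eq_sum_div_card,
      sum_boole, filter_mem_eq_inter]
  simp only [card_filter, Nat.cast_sum, Nat.cast_ite, Nat.cast_one, Nat.cast_zero,
    expect_sum_comm, hmem, sum_const, card_univ, nsmul_eq_mul]

lemma expect_piFinset_forall_notMem [Semifield 𝕜] [CharZero 𝕜] [DecidableEq ι]
    (X D : Finset α) :
    𝔼 x ∈ Fintype.piFinset fun _ : ι => X, (if ∀ i, x i ∉ D then (1 : 𝕜) else 0) =
      (#(X \ D) / #X : 𝕜) ^ Fintype.card ι := by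
  have havoid : {x ∈ Fintype.piFinset fun _ : ι => X | ∀ i, x i ∉ D} =
      Fintype.piFinset fun _ : ι => X \ D := by
    ext x
    simp [forall_and]
  rw [expect_eq_sum_div_card, sum_boole, havoid, Fintype.card_piFinset, Fintype.card_piFinset,
    prod_const, prod_const, card_univ, Nat.cast_pow, Nat.cast_pow, div_pow]

lemma expect_card_offDiag_unseparated_le [DecidableEq ι] {X : Finset α} {P : Finset (Finset α)}
    {q : ℝ} (hX : X.Nonempty) (hPX : ∀ F ∈ P, F ⊆ X)
    (hsep : (P : Set (Finset α)).Pairwise fun S T => q * #X ≤ #(S ∆ T)) :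
    𝔼 x ∈ Fintype.piFinset fun _ : ι => X,
        (#{r ∈ P.offDiag | ∀ i, x i ∉ r.1 ∆ r.2} : ℝ) ≤
      #P.offDiag * (1 - q) ^ Fintype.card ι := by
  have hX₀ : (0 : ℝ) < #X := by exact_mod_cast hX.card_pos
  simp only [card_filter, Nat.cast_sum, Nat.cast_ite, Nat.cast_one, Nat.cast_zero,
    expect_sum_comm, expect_piFinset_forall_notMem]
  rw [← nsmul_eq_mul]
  refine sum_le_card_nsmul _ _ _ fun ⟨S, T⟩ hST => ?_
  obtain ⟨hS, hT, hne⟩ := mem_offDiag.1 hST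
  have hsub : S ∆ T ⊆ X := symmDiff_le_sup.trans (sup_le (hPX S hS) (hPX T hT))
  have hcard : (#(X \ S ∆ T) : ℝ) = #X - #(S ∆ T) := cast_card_sdiff hsub
  have hq : q * #X ≤ #(S ∆ T) := hsep hS hT hne
  gcongr
  rw [div_le_iff₀ hX₀, hcard]
  linarith

lemma injOn_inter_image_of_forall_offDiag {P : Finset (Finset α)} {x : ι → α}
    (hx : ∀ r ∈ P.offDiag, ∃ i, x i ∈ r.1 ∆ r.2) :
    Set.InjOn (· ∩ univ.image x) (P : Set (Finset α)) := by
  intro S hS T hT hST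
  by_contra hne
  obtain ⟨i, hi⟩ := hx (S, T) (mem_offDiag.2 ⟨hS, hT, hne⟩)
  have hdisj : S ∆ T ∩ univ.image x = ∅ := by
    rw [← inf_eq_inter, inf_symmDiff_distrib_right]
    exact symmDiff_eq_bot.2 hST
  exact notMem_empty (x i) (hdisj ▸ mem_inter.2 ⟨hi, mem_image_of_mem x (mem_univ i)⟩)

lemma card_inter_image_le_card_filter_mem (F : Finset α) (x : ι → α) :
    #(F ∩ univ.image x) ≤ #{i | x i ∈ F} := by
  have himage : F ∩ univ.image x = ({i | x i ∈ F} : Finset ι).image x := by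
    ext a
    simp only [mem_inter, mem_image, mem_univ, true_and, mem_filter]
    grind
  exact himage ▸ card_image_le

lemma exists_separating_subset [Nonempty ι] {X : Finset α} {P : Finset (Finset α)} {q w : ℝ}
    (hX : X.Nonempty) (hPX : ∀ F ∈ P, F ⊆ X)
    (hsep : (P : Set (Finset α)).Pairwise fun S T => q * #X ≤ #(S ∆ T))
    (hq : #P.offDiag * (1 - q) ^ Fintype.card ι < 1 / 2)
    (hw₀ : 0 < w) (hw : ∑ F ∈ P, (#F : ℝ) ≤ w * #X) :
    ∃ Y ⊆ X, Y.Nonempty ∧ #Y ≤ Fintype.card ι ∧ Set.InjOn (· ∩ Y) (P : Set (Finset α)) ∧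
      ∑ F ∈ P, (#(F ∩ Y) : ℝ) ≤ 2 * (Fintype.card ι * w) := by
  classical
  have hX₀ : (0 : ℝ) < #X := by exact_mod_cast hX.card_pos
  have hμ : 0 < 2 * (Fintype.card ι * w) := by positivity
  let hits (x : ι → α) : ℝ := ∑ F ∈ P, (#{i | x i ∈ F} : ℝ)
  let unseparated (x : ι → α) : Finset (Finset α × Finset α) :=
    {r ∈ P.offDiag | ∀ i, x i ∉ r.1 ∆ r.2}
  have hhits : 𝔼 x ∈ Fintype.piFinset fun _ : ι => X, hits x ≤ Fintype.card ι * w := by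
    simp only [hits, expect_sum_comm, expect_piFinset_card_filter_mem]
    rw [← mul_sum, ← sum_div, sum_congr rfl fun F hF => by rw [inter_eq_right.2 (hPX F hF)]]
    gcongr
    exact (div_le_iff₀ hX₀).2 hw
  have hmean : 𝔼 x ∈ Fintype.piFinset fun _ : ι => X,
      (hits x / (2 * (Fintype.card ι * w)) + #(unseparated x)) < 1 := by
    rw [expect_add_distrib, ← expect_div]
    have hhalf : (𝔼 x ∈ Fintype.piFinset fun _ : ι => X, hits x) / (2 * (Fintype.card ι * w)) ≤
        1 / 2 := by
      rw [div_le_iff₀ hμ]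
      linarith
    linarith [expect_card_offDiag_unseparated_le (ι := ι) hX hPX hsep]
  obtain ⟨x, hxX, hx⟩ :=
    exists_lt_of_expect_lt (Fintype.piFinset_nonempty.2 fun _ : ι => hX) hmean
  have hfrac : 0 ≤ hits x / (2 * (Fintype.card ι * w)) := by positivity
  have hunsep : unseparated x = ∅ := by
    have : (#(unseparated x) : ℝ) < 1 := by linarith
    exact card_eq_zero.1 (Nat.lt_one_iff.1 (by exact_mod_cast this))
  refine ⟨univ.image x, image_subset_iff.2 fun i _ => Fintype.mem_piFinset.1 hxX i,
    univ_nonempty.image x, card_image_le, injOn_inter_image_of_forall_offDiag fun r hr => ?_, ?_⟩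
  · simpa using filter_eq_empty_iff.1 hunsep hr
  · have hlt : hits x / (2 * (Fintype.card ι * w)) < 1 := by
      linarith [(#(unseparated x)).cast_nonneg (α := ℝ)]
    calc ∑ F ∈ P, (#(F ∩ univ.image x) : ℝ) ≤ hits x :=
          sum_le_sum fun F _ => mod_cast card_inter_image_le_card_filter_mem F x
      _ ≤ 2 * (Fintype.card ι * w) := ((div_lt_one hμ).1 hlt).le

end Sampling

section Finset

open Finset

variable {β : Type*}

lemma card_le_two_mul_card_filter_le {s : Finset β} {f : β → ℝ} {μ : ℝ} (hμ : 0 < μ)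
    (hf : ∀ a ∈ s, 0 ≤ f a) (hsum : ∑ a ∈ s, f a ≤ #s * μ) :
    (#s : ℝ) ≤ 2 * #{a ∈ s | f a ≤ 2 * μ} := by
  have hmarkov : (#{a ∈ s | ¬ f a ≤ 2 * μ} : ℝ) * (2 * μ) ≤ ∑ a ∈ s, f a := by
    rw [← nsmul_eq_mul]
    exact (card_nsmul_le_sum _ f _ fun a ha => (not_le.1 (mem_filter.1 ha).2).le).trans
      (sum_le_sum_of_subset_of_nonneg (filter_subset _ _) fun a ha _ => hf a ha)
  have hsplit : (#{a ∈ s | f a ≤ 2 * μ} : ℝ) + #{a ∈ s | ¬ f a ≤ 2 * μ} = #s := by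
    exact_mod_cast card_filter_add_card_filter_not (s := s) (f · ≤ 2 * μ)
  have hheavy : 2 * (#{a ∈ s | ¬ f a ≤ 2 * μ} : ℝ) ≤ #s := by
    refine le_of_mul_le_mul_right ?_ hμ
    linarith
  linarith

lemma card_le_of_forall_subset_card_le_add_one {s : Finset β} {B : ℝ} (hB : 0 ≤ B)
    (h : ∀ t ⊆ s, (#t : ℝ) ≤ B + 1 → (#t : ℝ) ≤ B) : (#s : ℝ) ≤ B := by
  by_contra! hlt
  obtain ⟨t, hts, ht⟩ := exists_subset_card_eq (Nat.succ_le_of_lt ((Nat.floor_lt hB).2 hlt))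
  have htB : (#t : ℝ) = ⌊B⌋₊ + 1 := by simp [ht]
  linarith [h t hts (by linarith [Nat.floor_le hB]), Nat.lt_floor_add_one B]

end Finset

section SizeSensitiveCounting

open Finset

variable {α : Type*} [DecidableEq α]

/-- The size-sensitive counting condition with parameters `(C, d, d₁)`: a bound on the number of
small traces of `𝒮` on every subset of the ground set `X`. The exponent `d - d₁` is truncated, so
the condition is meant for `d₁ ≤ d`. -/
def SizeSensitiveCounting (X : Finset α) (𝒮 : Finset (Finset α)) (C : ℝ) (d d₁ : ℕ) : Prop :=
  ∀ Y ⊆ X, ∀ k : ℕ, 1 ≤ k → k ≤ #Y →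
    (#{T ∈ 𝒮.image (· ∩ Y) | #T ≤ k} : ℝ) ≤ C * (#Y : ℝ) ^ d₁ * (k : ℝ) ^ (d - d₁)

namespace SizeSensitiveCounting

variable {X Y : Finset α} {𝒮 P : Finset (Finset α)} {C : ℝ} {d d₁ : ℕ}

lemma card_filter_card_inter_le (h : SizeSensitiveCounting X 𝒮 C d d₁) (hC : 0 ≤ C) (hP : P ⊆ 𝒮)
    (hYX : Y ⊆ X) (hY : Y.Nonempty) (hinj : Set.InjOn (· ∩ Y) (P : Set (Finset α)))
    {r : ℝ} (hr : 1 ≤ r) :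
    (#{F ∈ P | (#(F ∩ Y) : ℝ) ≤ r} : ℝ) ≤ C * (#Y : ℝ) ^ d₁ * r ^ (d - d₁) := by
  let k := min ⌊r⌋₊ #Y
  have hk : 1 ≤ k := le_min ((Nat.one_le_floor_iff r).2 hr) hY.card_pos
  have hkr : (k : ℝ) ≤ r :=
    (Nat.cast_le.2 (min_le_left _ _)).trans (Nat.floor_le (zero_le_one.trans hr))
  have htrace : #{F ∈ P | (#(F ∩ Y) : ℝ) ≤ r} ≤ #{T ∈ 𝒮.image (· ∩ Y) | #T ≤ k} := by
    refine card_le_card_of_injOn (· ∩ Y) (fun F hF => ?_)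
      (hinj.mono (coe_subset.2 (filter_subset _ P)))
    obtain ⟨hFP, hFr⟩ := mem_filter.1 (mem_coe.1 hF)
    exact mem_coe.2 (mem_filter.2 ⟨mem_image_of_mem _ (hP hFP),
      le_min (Nat.le_floor hFr) (card_le_card inter_subset_right)⟩)
  calc (#{F ∈ P | (#(F ∩ Y) : ℝ) ≤ r} : ℝ)
      ≤ #{T ∈ 𝒮.image (· ∩ Y) | #T ≤ k} := mod_cast htrace
    _ ≤ C * (#Y : ℝ) ^ d₁ * (k : ℝ) ^ (d - d₁) := h Y hYX k hk (min_le_right _ _)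
    _ ≤ C * (#Y : ℝ) ^ d₁ * r ^ (d - d₁) := by gcongr

lemma card_le_of_separated_sample (h : SizeSensitiveCounting X 𝒮 C d d₁) (hC : 0 ≤ C)
    (hX : X.Nonempty) (h𝒮 : ∀ S ∈ 𝒮, S ⊆ X) (hP : P ⊆ 𝒮) {m : ℕ} [NeZero m] {p q r : ℝ}
    (hsep : (P : Set (Finset α)).Pairwise fun S T => q * #X ≤ #(S ∆ T))
    (hq : #P.offDiag * (1 - q) ^ m < 1 / 2)
    (hp₀ : 0 < p) (hp : ∀ F ∈ P, (#F : ℝ) ≤ p * #X) (hr : 1 ≤ r) (hpr : 4 * (m * p) ≤ r) :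
    (#P : ℝ) ≤ 2 * (C * (m : ℝ) ^ d₁ * r ^ (d - d₁)) := by
  obtain rfl | hPne := P.eq_empty_or_nonempty
  · simp only [card_empty, Nat.cast_zero]
    positivity
  have hm₀ : (0 : ℝ) < m := by exact_mod_cast NeZero.pos m
  have hweight : ∑ F ∈ P, (#F : ℝ) ≤ #P * p * #X := by
    rw [mul_assoc, ← nsmul_eq_mul]
    exact sum_le_card_nsmul _ _ _ hp
  obtain ⟨Y, hYX, hY, hYm, hinj, hsum⟩ := exists_separating_subset (ι := Fin m) hX
    (fun F hF => h𝒮 F (hP hF)) hsep (by rwa [Fintype.card_fin]) (by positivity) hweight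
  rw [Fintype.card_fin] at hYm hsum
  have hlight : (#P : ℝ) ≤ 2 * #{F ∈ P | (#(F ∩ Y) : ℝ) ≤ 2 * (2 * (m * p))} :=
    card_le_two_mul_card_filter_le (by positivity) (fun _ _ => Nat.cast_nonneg _)
      (hsum.trans_eq (by ring))
  have hmono : #{F ∈ P | (#(F ∩ Y) : ℝ) ≤ 2 * (2 * (m * p))} ≤ #{F ∈ P | (#(F ∩ Y) : ℝ) ≤ r} :=
    card_le_card (monotone_filter_right P fun F _ hF => hF.trans (by linarith))
  calc (#P : ℝ) ≤ 2 * #{F ∈ P | (#(F ∩ Y) : ℝ) ≤ 2 * (2 * (m * p))} := hlight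
    _ ≤ 2 * #{F ∈ P | (#(F ∩ Y) : ℝ) ≤ r} := by gcongr
    _ ≤ 2 * (C * (#Y : ℝ) ^ d₁ * r ^ (d - d₁)) := by
      gcongr
      exact h.card_filter_card_inter_le hC hP hYX hY hinj hr
    _ ≤ 2 * (C * (m : ℝ) ^ d₁ * r ^ (d - d₁)) := by gcongr

end SizeSensitiveCounting

end SizeSensitiveCounting

section Real

lemma one_sub_one_div_pow_le_inv_pow {t : ℝ} (ht : 1 ≤ t) {c m : ℕ}
    (hm : c * Real.logb 2 t * t ≤ m) : (1 - 1 / t) ^ m ≤ (t ^ c)⁻¹ := by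
  have ht₀ : 0 < t := zero_lt_one.trans_le ht
  have hlog : Real.log t ≤ Real.logb 2 t :=
    le_div_self (Real.log_nonneg ht) (Real.log_pos one_lt_two) (by linarith [Real.log_two_lt_d9])
  have hexponent : c * Real.log t ≤ m * (1 / t) := by
    rw [mul_one_div, le_div_iff₀ ht₀]
    exact le_trans (by gcongr) hm
  have hnonneg : 0 ≤ 1 - 1 / t := sub_nonneg.2 ((div_le_one ht₀).2 ht)
  calc (1 - 1 / t) ^ m ≤ Real.exp (-(1 / t)) ^ m := by
        gcongr
        exact Real.one_sub_le_exp_neg _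
    _ = Real.exp (-(m * (1 / t))) := by rw [← Real.exp_nat_mul, mul_neg]
    _ ≤ Real.exp (-(c * Real.log t)) := by gcongr
    _ = (t ^ c)⁻¹ := by rw [Real.exp_neg, Real.exp_nat_mul, Real.exp_log ht₀]

lemma one_le_logb_two {t : ℝ} (ht : 2 ≤ t) : 1 ≤ Real.logb 2 t := by
  rw [Real.le_logb_iff_rpow_le one_lt_two (by linarith), Real.rpow_one]
  exact ht

lemma logb_two_le_self {t : ℝ} (ht : 1 ≤ t) : Real.logb 2 t ≤ t := by
  rw [Real.logb_le_iff_le_rpow one_lt_two (by linarith)]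
  have hbernoulli := one_add_mul_self_le_rpow_one_add (s := 1) (by norm_num) ht
  norm_num at hbernoulli
  linarith

lemma exists_forall_mul_pow_mul_pow_lt_pow (D : ℝ) (e k : ℕ) {b : ℝ} (hb : 1 < b) :
    ∃ c : ℕ, 1 ≤ c ∧ ∀ t : ℝ, b ≤ t → D * (c : ℝ) ^ e * t ^ k < t ^ c := by
  have hlim : Filter.Tendsto (fun n : ℕ => D * b ^ k * ((n : ℝ) ^ e / b ^ n)) Filter.atTop
      (nhds 0) := by
    simpa only [mul_zero] using (tendsto_pow_const_div_const_pow_of_one_lt e hb).const_mul _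
  obtain ⟨c, hc, hkc⟩ :=
    ((hlim.eventually_lt_const one_pos).and (Filter.eventually_ge_atTop (k + 1))).exists
  refine ⟨c, by lia, fun t ht => ?_⟩
  have hkc' : k ≤ c := by lia
  have hb₀ : 0 < b := by linarith
  have hDb : D * (c : ℝ) ^ e * b ^ k < b ^ (c - k) * b ^ k := by
    rw [← mul_div_assoc, div_lt_one (by positivity)] at hc
    rw [← pow_add, Nat.sub_add_cancel hkc']
    linarith
  calc D * (c : ℝ) ^ e * t ^ k < t ^ (c - k) * t ^ k := by
        have ht₀ : 0 < t := hb₀.trans_le ht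
        gcongr
        exact (lt_of_mul_lt_mul_right hDb (by positivity)).trans_le (by gcongr)
    _ = t ^ c := by rw [← pow_add, Nat.sub_add_cancel hkc']

end Real

section Packing

open Finset

universe u

lemma SizeSensitiveCounting.card_le_of_card_offDiag_lt {α : Type*} [DecidableEq α] {X : Finset α}
    {𝒮 P : Finset (Finset α)} {C K s t : ℝ} {d d₁ c : ℕ} (h : SizeSensitiveCounting X 𝒮 C d d₁)
    (hC : 0 ≤ C) (hK : 0 < K) (hd : d₁ ≤ d) (hX : X.Nonempty) (h𝒮 : ∀ S ∈ 𝒮, S ⊆ X) (hP : P ⊆ 𝒮)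
    (hs : 0 < s) (hst : s ≤ t) (ht : 2 ≤ t) (hc : 1 ≤ c)
    (hsep : (P : Set (Finset α)).Pairwise fun S T => #X / t ≤ #(S ∆ T))
    (hsize : ∀ F ∈ P, (#F : ℝ) ≤ K * #X / s) (hsmall : #P.offDiag * (t ^ c)⁻¹ < (1 / 2 : ℝ)) :
    (#P : ℝ) ≤
      2 * C * (4 * K + 1) ^ d * 2 ^ d * (c : ℝ) ^ d * Real.logb 2 t ^ d * t ^ d / s ^ (d - d₁) := by
  have hL : 1 ≤ Real.logb 2 t := one_le_logb_two ht
  have hc' : (1 : ℝ) ≤ c := mod_cast hc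
  have htc : t ≤ c * Real.logb 2 t * t :=
    le_mul_of_one_le_left (by linarith) (one_le_mul_of_one_le_of_one_le hc' hL)
  set m : ℕ := ⌈c * Real.logb 2 t * t⌉₊
  have hm_ge : c * Real.logb 2 t * t ≤ m := Nat.le_ceil _
  have hm_le : (m : ℝ) ≤ 2 * (c * Real.logb 2 t * t) := by
    linarith [Nat.ceil_lt_add_one (a := c * Real.logb 2 t * t) (by linarith)]
  have : NeZero m := ⟨(Nat.ceil_pos.2 (by linarith)).ne'⟩
  have hms : 1 ≤ m / s := (one_le_div hs).2 (by linarith)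
  have hbound : (#P : ℝ) ≤ 2 * (C * (m : ℝ) ^ d₁ * ((4 * K + 1) * (m / s)) ^ (d - d₁)) :=
    h.card_le_of_separated_sample hC hX h𝒮 hP (p := K / s) (q := 1 / t)
      (hsep.mono' fun S T hST => (by ring : 1 / t * (#X : ℝ) = #X / t).trans_le hST)
      (lt_of_le_of_lt (by gcongr; exact one_sub_one_div_pow_le_inv_pow (by linarith) hm_ge) hsmall)
      (by positivity) (fun F hF => (hsize F hF).trans_eq (by ring))
      (one_le_mul_of_one_le_of_one_le (by linarith) hms)
      (by linarith [(by ring : 4 * (m * (K / s)) = 4 * K * (m / s))])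
  calc (#P : ℝ) ≤ 2 * (C * (m : ℝ) ^ d₁ * ((4 * K + 1) * (m / s)) ^ (d - d₁)) := hbound
    _ = 2 * C * (4 * K + 1) ^ (d - d₁) * (m : ℝ) ^ d / s ^ (d - d₁) := by
      rw [← pow_mul_pow_sub (m : ℝ) hd, mul_pow, div_pow]
      ring
    _ ≤ 2 * C * (4 * K + 1) ^ d * (2 * (c * Real.logb 2 t * t)) ^ d / s ^ (d - d₁) := by
      gcongr
      · linarith
      · exact Nat.sub_le d d₁
    _ = _ := by
      rw [mul_pow, mul_pow, mul_pow]
      ring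

theorem stmt9_general (d : ℕ) (C K : ℝ) (hC : 0 < C) (hK : 0 < K) :
    ∃ C' : ℝ, 0 < C' ∧
      ∀ d₁ ≤ d, ∀ (α : Type u) [DecidableEq α] (X : Finset α) (𝒮 : Finset (Finset α)),
        X.Nonempty → (∀ S ∈ 𝒮, S ⊆ X) → SizeSensitiveCounting X 𝒮 C d d₁ →
        ∀ s t : ℝ, 1 ≤ s → s ≤ t → 2 ≤ t → ∀ P ⊆ 𝒮,
          (P : Set (Finset α)).Pairwise (fun S T => #X / t ≤ #(S ∆ T)) →
          (∀ F ∈ P, (#F : ℝ) ≤ K * #X / s) →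
          (#P : ℝ) ≤ C' * Real.logb 2 t ^ d * t ^ d / s ^ (d - d₁) := by
  let A : ℝ := 2 * C * (4 * K + 1) ^ d * 2 ^ d
  have hA : 0 < A := by positivity
  obtain ⟨c, hc, hct⟩ :=
    exists_forall_mul_pow_mul_pow_lt_pow (2 * (A + 1) ^ 2) (2 * d) (4 * d) one_lt_two
  have hc' : (1 : ℝ) ≤ c := mod_cast hc
  refine ⟨A * (c : ℝ) ^ d, by positivity, ?_⟩
  intro d₁ hd α _ X 𝒮 hX h𝒮 h s t hs hst ht P hP hsep hsize
  have ht₁ : 1 ≤ t := by linarith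
  have hL : 1 ≤ Real.logb 2 t := one_le_logb_two ht
  refine card_le_of_forall_subset_card_le_add_one (by positivity) fun Q hQP hQ =>
    h.card_le_of_card_offDiag_lt hC.le hK hd hX h𝒮 (hQP.trans hP) (by linarith) hst ht hc
      (hsep.mono (coe_subset.2 hQP)) (fun F hF => hsize F (hQP hF)) ?_
  have hQ_le : (#Q : ℝ) ≤ (A + 1) * (c : ℝ) ^ d * t ^ (2 * d) := by
    calc (#Q : ℝ) ≤ A * (c : ℝ) ^ d * Real.logb 2 t ^ d * t ^ d / s ^ (d - d₁) + 1 := hQ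
      _ ≤ A * (c : ℝ) ^ d * t ^ d * t ^ d + (c : ℝ) ^ d * t ^ (2 * d) := by
        gcongr
        · exact (div_le_self (by positivity) (one_le_pow₀ hs)).trans
            (by gcongr; exact logb_two_le_self ht₁)
        · exact one_le_mul_of_one_le_of_one_le (one_le_pow₀ hc') (one_le_pow₀ ht₁)
      _ = _ := by ring
  have hoffDiag : (#Q.offDiag : ℝ) ≤ (#Q : ℝ) ^ 2 := by
    rw [sq]
    exact_mod_cast Q.offDiag_card.trans_le (Nat.sub_le _ _)
  rw [← div_eq_mul_inv, div_lt_iff₀ (by positivity)]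
  calc (#Q.offDiag : ℝ) ≤ ((A + 1) * (c : ℝ) ^ d * t ^ (2 * d)) ^ 2 := by grw [hoffDiag, hQ_le]
    _ = 1 / 2 * (2 * (A + 1) ^ 2 * (c : ℝ) ^ (2 * d) * t ^ (4 * d)) := by ring
    _ < 1 / 2 * t ^ c := by
      gcongr
      exact hct t ht

end Packing

/-- Sensitive Packing Lemma.
Let `d ≥ 1`, `1 ≤ d₁ ≤ d` be integers and `C, K > 0`. There exists `C' > 0` (depending
only on `d`, `C`, `K`) such that: for every set system `(X, 𝒮)` with `|X| = n = 2^κ`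
(`κ ≥ 1`) satisfying the size-sensitive counting condition with parameters `(C, d, d₁)`,
for all integers `i, j` with `1 ≤ i`, `i − 1 ≤ j ≤ κ`, `j ≥ 1`, every `(n/2^j)`-separated
subfamily `P ⊆ 𝒮` all of whose members `F` satisfy `|F| ≤ K·n/2^{i−1}` has
`|P| ≤ C' · j^d · 2^{jd} / 2^{(d−d₁)(i−1)}`. -/
theorem stmt9 (d d₁ : ℕ) (hd : 1 ≤ d) (hd₁ : 1 ≤ d₁) (hd₁d : d₁ ≤ d)
    (C K : ℝ) (hC : 0 < C) (hK : 0 < K) :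
    ∃ C' : ℝ, 0 < C' ∧
      ∀ (α : Type) [DecidableEq α] (X : Finset α) (𝒮 : Finset (Finset α)) (κ : ℕ),
        1 ≤ κ → X.card = 2 ^ κ → (∀ S ∈ 𝒮, S ⊆ X) →
        (∀ Y ⊆ X, ∀ k : ℕ, 1 ≤ k → k ≤ Y.card →
          (((𝒮.image (· ∩ Y)).filter fun T => T.card ≤ k).card : ℝ) ≤
            C * (Y.card : ℝ) ^ d₁ * (k : ℝ) ^ (d - d₁)) →
        ∀ i j : ℕ, 1 ≤ i → i - 1 ≤ j → 1 ≤ j → j ≤ κ →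
          ∀ P : Finset (Finset α), P ⊆ 𝒮 →
            (∀ S₁ ∈ P, ∀ S₂ ∈ P, S₁ ≠ S₂ →
              (2 : ℝ) ^ κ / 2 ^ j < ((S₁ ∆ S₂).card : ℝ)) →
            (∀ F ∈ P, (F.card : ℝ) ≤ K * (2 : ℝ) ^ κ / 2 ^ (i - 1)) →
            (P.card : ℝ) ≤ C' * (j : ℝ) ^ d * 2 ^ (j * d) / 2 ^ ((d - d₁) * (i - 1)) := by
  obtain ⟨C', hC', hpack⟩ := stmt9_general d C K hC hK
  refine ⟨C', hC', fun α _ X 𝒮 κ _ hX h𝒮 h i j _ hij hj _ P hP hsep hsize => ?_⟩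
  have hbound := hpack d₁ hd₁d α X 𝒮 (Finset.card_pos.1 (by rw [hX]; positivity)) h𝒮 h
    (2 ^ (i - 1)) (2 ^ j) (one_le_pow₀ one_le_two) (pow_le_pow_right₀ one_le_two hij)
    (le_self_pow₀ one_le_two (by lia)) P hP
    (fun S hS T hT hne => by simpa [hX] using (hsep S hS T hT hne).le) (by simpa [hX] using hsize)
  simpa [Real.logb_pow, ← pow_mul, mul_comm (d - d₁)] using hbound
end
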